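/- arXiv:2501.16339 — 2 statements merged into one kernel-verified Lean document; each statement's English description precedes it below -/
import Mathlib

section
/- (Lemma 4.4: conjugate of partial Bessel functions) Let c = diag(I_{l-1}, 1, -1, I_{l-1}) and t̃ = diag(I_{l-1}, -1, -1, I_{l-1}). Let W : SO_{2l}(J_{2l,ρ}) → ℂ satisfy W(u·g) = ψ(u)·W(g) for all u ∈ U_{SO_{2l}} and all g, and W(I_{2l}) = 1, and suppose there is a positive integer C with W(g·k) = W(g) for all k ∈ K_C and all g. Define W^c(g) = W(c·t̃^{-1}·g·t̃·c), and for m ≥ 1 define W_m(g) = ∫_{U_m} ψ_m(u)^{-1}·W(g·u) dμ_m(u) with μ_m the Haar probability measure on U_m, and likewise (W^c)_m from W^c; also set (W_m)^c(g) = W_m(c·t̃^{-1}·g·t̃·c). Then: (1) W^c(I_{2l}) = 1 and W^c(u·g) = ψ(u)·W^c(g) for all u ∈ U_{SO_{2l}}; (2) (W^c)_m = (W_m)^c for every m ≥ 1; (3) for every m ≥ 1, W is invariant under right translation by K_m if and only if W^c is; (4) for m ≥ C, (W^c)_m(u·g·h) = ψ(u)·ψ_m(h)·(W^c)_m(g)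 for all u ∈ U_{SO_{2l}}, h ∈ H_m, g ∈ SO_{2l}(J_{2l,ρ}). -/
/-!
Put `d = c t̃⁻¹ = diag(I_{l-1}, -1, 1, I_{l-1})`, so that `d = d⁻¹` and `W^c = W ∘ φ` with
`φ(g) = d * g * d`. Although `det d = -1`, the matrix `d` preserves the form, which is diagonal on
the two middle basis vectors. Hence `φ` is an involutive automorphism of the group; it preserves
`U_{SO_{2l}}`, `K_m`, `H_m` and `U_m`. It also preserves the linear form `λ` defining `ψ`, as no
entry in row or column `l` (counted from `1`) occurs in `λ`. Assertions (1) and (3) follow directly.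

For (2), conjugation by `e_m` scales `λ` by exactly the power of `p` occurring in `τ_m`, so
`ψ_m = ψ₀ ∘ λ` (`psim_eq`) is `φ`-invariant. It remains to change variables by `φ` in the integral,
so `μ` has to be `φ`-stable (`map_phi`). Both `μ` and its image under `φ` are invariant probability
measures on `U_m`, and two such measures agree, as Fubini shows by computing their convolution in
two ways (`measure_eq_of_invariant`).

For (4), `W^c` satisfies the same hypotheses as `W`, so it suffices to treat `W_m` for a right
`K_m`-invariant `W` (`WmInt_equivariant`). Left equivariance is immediate. For the right one:

* `ψ_m` is a character of `H_m`, because `λ(xy) - λ(x) - λ(y) ∈ p^{2m} ℤ_p` on `K_m`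
  (`psim_mul`; here `1/2` is integral since `p` is odd). It is trivial on `L = H_m ∩ K_m`.
* `H_m = U_m L` (`Hm.factor`). An element of `K_m` has a block `UL` factorisation with respect to
  the flag with Levi factor `GL₁^{l-1} × SO₂`; weights show that both factors preserve the form
  (`form_of_block_factor`), and conjugation by `e_m` moves the lower triangular factor into `K_m`.
* The function `u ↦ ψ_m(u)⁻¹ W(gu)` on `H_m` is right `L`-invariant, `L` has finite index in `H_m`,
  and each coset of `L` meets `U_m` in a set of the same mass. So the integral over `U_m` is a
  constant times the sum over `H_m / L` (`integral_eq_sum`). Replacing `g` by `gh` with `h ∈ H_m`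
  permutes the cosets and pulls out the factor `ψ_m(h)`.
-/

open Matrix BigOperators

noncomputable section

/-- Entry of a square matrix read with 0-indexed natural-number indices (`0` out of range). -/
def ent {F : Type*} [Field F] {N : ℕ} (g : Matrix (Fin N) (Fin N) F) (i j : ℕ) : F :=
  if h : i < N ∧ j < N then g ⟨i, h.1⟩ ⟨j, h.2⟩ else 0

/-- The antidiagonal matrix `J_n` (entry `(i,j)` is `1` iff `i+j = n+1` in 1-indexed terms). -/
def Jmat (F : Type*) [Field F] (n : ℕ) : Matrix (Fin n) (Fin n) F :=
  Matrix.of fun i j => if (i : ℕ) + (j : ℕ) + 1 = n then 1 else 0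

/-- `J_{2l,ρ} = diag(I_{l-1}, [[0,1],[-ρ,0]], I_{l-1}) · J_{2l}`. -/
def Jrho (F : Type*) [Field F] (l : ℕ) (ρ : F) : Matrix (Fin (2*l)) (Fin (2*l)) F :=
  (Matrix.of fun i j : Fin (2*l) =>
    if (i : ℕ) = l - 1 ∧ (j : ℕ) = l then 1
    else if (i : ℕ) = l ∧ (j : ℕ) = l - 1 then -ρ
    else if i = j ∧ ((i : ℕ) < l - 1 ∨ l + 1 ≤ (i : ℕ)) then 1
    else 0) * Jmat F (2*l)

/-- Membership in the quasi-split even special orthogonal group `SO_{2l}(J_{2l,ρ})`. -/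
def SO2l {F : Type*} [Field F] (l : ℕ) (ρ : F) (g : Matrix (Fin (2*l)) (Fin (2*l)) F) : Prop :=
  g.det = 1 ∧ gᵀ * Jrho F l ρ * g = Jrho F l ρ

/-- Membership in `U_{SO_{2l}}`: upper triangular, all diagonal entries `1`, and in `SO_{2l}`. -/
def USO2l {F : Type*} [Field F] (l : ℕ) (ρ : F) (g : Matrix (Fin (2*l)) (Fin (2*l)) F) : Prop :=
  SO2l l ρ g ∧ (∀ i j : Fin (2*l), (j : ℕ) < (i : ℕ) → g i j = 0) ∧ ∀ i, g i i = 1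

/-- Exponent of the diagonal entry of
`e_m = diag(p^{-2m(l-1)}, …, p^{-2m}, 1, 1, p^{2m}, …, p^{2m(l-1)})`. -/
def expo (l m i : ℕ) : ℤ :=
  if i < l - 1 then -((2 * m * (l - 1 - i) : ℕ) : ℤ)
  else if l + 1 ≤ i then ((2 * m * (i - l) : ℕ) : ℤ)
  else 0

/-- The diagonal matrix `e_m`. -/
def emat (p l m : ℕ) [Fact p.Prime] : Matrix (Fin (2*l)) (Fin (2*l)) ℚ_[p] :=
  Matrix.diagonal fun i => (p : ℚ_[p]) ^ (expo l m (i : ℕ))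

/-- The diagonal matrix `e_m⁻¹`. -/
def ematInv (p l m : ℕ) [Fact p.Prime] : Matrix (Fin (2*l)) (Fin (2*l)) ℚ_[p] :=
  Matrix.diagonal fun i => (p : ℚ_[p]) ^ (-(expo l m (i : ℕ)))

/-- Membership in `K_m = (I_{2l} + p^m·M_{2l}(ℤ_p)) ∩ SO_{2l}(J_{2l,ρ})`. -/
def Km (p l m : ℕ) [Fact p.Prime] (ρ : ℚ_[p])
    (g : Matrix (Fin (2*l)) (Fin (2*l)) ℚ_[p]) : Prop :=
  SO2l l ρ g ∧
    ∀ i j : Fin (2*l), ‖g i j - (if i = j then 1 else 0)‖ ≤ (p : ℝ) ^ (-(m : ℤ))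

/-- Membership in `H_m = e_m·K_m·e_m⁻¹`. -/
def Hm (p l m : ℕ) [Fact p.Prime] (ρ : ℚ_[p])
    (h : Matrix (Fin (2*l)) (Fin (2*l)) ℚ_[p]) : Prop :=
  Km p l m ρ (ematInv p l m * h * emat p l m)

/-- Membership in `U_m = U_{SO_{2l}} ∩ H_m`. -/
def Um (p l m : ℕ) [Fact p.Prime] (ρ : ℚ_[p])
    (u : Matrix (Fin (2*l)) (Fin (2*l)) ℚ_[p]) : Prop :=
  USO2l l ρ u ∧ Hm p l m ρ u

/-- `λ(g) = Σ_{i=1}^{l-2} g_{i,i+1} + (1/2)·g_{l-1,l+1}` (1-indexed entries as in the paper). -/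
def lamU {F : Type*} [Field F] (l : ℕ) (g : Matrix (Fin (2*l)) (Fin (2*l)) F) : F :=
  (∑ i ∈ Finset.range (l - 2), ent g i (i + 1)) + (1/2) * ent g (l - 2) l

/-- `τ_m(k) = ψ₀(p^{-2m}·(Σ_{i=1}^{l-2} k_{i,i+1} + (1/2)·k_{l-1,l+1}))`. -/
def taum (p l m : ℕ) [Fact p.Prime] (ψ₀ : AddChar ℚ_[p] ℂˣ)
    (k : Matrix (Fin (2*l)) (Fin (2*l)) ℚ_[p]) : ℂˣ :=
  ψ₀ ((p : ℚ_[p]) ^ (-(2 * m : ℤ)) * lamU l k)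

/-- `ψ_m(h) = τ_m(e_m⁻¹·h·e_m)`. -/
def psim (p l m : ℕ) [Fact p.Prime] (ψ₀ : AddChar ℚ_[p] ℂˣ)
    (h : Matrix (Fin (2*l)) (Fin (2*l)) ℚ_[p]) : ℂˣ :=
  taum p l m ψ₀ (ematInv p l m * h * emat p l m)

/-- `c = diag(I_{l-1}, 1, -1, I_{l-1})`. -/
def cmat (F : Type*) [Field F] (l : ℕ) : Matrix (Fin (2*l)) (Fin (2*l)) F :=
  Matrix.diagonal fun i => if (i : ℕ) = l then -1 else 1

/-- `t̃ = diag(I_{l-1}, -1, -1, I_{l-1})`. -/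
def ttildeMat (F : Type*) [Field F] (l : ℕ) : Matrix (Fin (2*l)) (Fin (2*l)) F :=
  Matrix.diagonal fun i => if (i : ℕ) = l - 1 ∨ (i : ℕ) = l then -1 else 1

open MeasureTheory

/-- `W^c(g) = W(c·t̃⁻¹·g·t̃·c)`. -/
def conjW (p l : ℕ) [Fact p.Prime] (W : Matrix (Fin (2*l)) (Fin (2*l)) ℚ_[p] → ℂ) :
    Matrix (Fin (2*l)) (Fin (2*l)) ℚ_[p] → ℂ :=
  fun g => W (cmat ℚ_[p] l * (ttildeMat ℚ_[p] l)⁻¹ * g * ttildeMat ℚ_[p] l * cmat ℚ_[p] l)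

/-- `W_m(g) = ∫_{U_m} ψ_m(u)⁻¹·W(g·u) dμ_m(u)`. -/
def WmInt (p l m : ℕ) [Fact p.Prime]
    [MeasurableSpace (Matrix (Fin (2*l)) (Fin (2*l)) ℚ_[p])]
    (ψ₀ : AddChar ℚ_[p] ℂˣ) (μ : Measure (Matrix (Fin (2*l)) (Fin (2*l)) ℚ_[p]))
    (W : Matrix (Fin (2*l)) (Fin (2*l)) ℚ_[p] → ℂ) :
    Matrix (Fin (2*l)) (Fin (2*l)) ℚ_[p] → ℂ :=
  fun g => ∫ u, ((psim p l m ψ₀ u : ℂ))⁻¹ * W (g * u) ∂μ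

/-! ### Matrices congruent to the identity -/

/-- All entries of `A` have absolute value at most `r`. -/
def Bd {p : ℕ} [Fact p.Prime] {n : ℕ} (r : ℝ) (A : Matrix (Fin n) (Fin n) ℚ_[p]) : Prop :=
  ∀ i j, ‖A i j‖ ≤ r

section Bd

variable {p : ℕ} [Fact p.Prime] {n : ℕ} {r s : ℝ} {A B : Matrix (Fin n) (Fin n) ℚ_[p]}

lemma Bd.mono (h : Bd r A) (hrs : r ≤ s) : Bd s A := fun i j => (h i j).trans hrs

lemma Bd.add (hA : Bd r A) (hB : Bd r B) : Bd r (A + B) := fun i j =>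
  (IsUltrametricDist.norm_add_le_max _ _).trans (max_le (hA i j) (hB i j))

lemma Bd.neg (hA : Bd r A) : Bd r (-A) := fun i j => by
  simpa using hA i j

lemma Bd.sub (hA : Bd r A) (hB : Bd r B) : Bd r (A - B) := by
  rw [sub_eq_add_neg]; exact hA.add hB.neg

lemma Bd.mul (hA : Bd r A) (hB : Bd s B) (hr : 0 ≤ r) (hs : 0 ≤ s) : Bd (r * s) (A * B) :=
  fun i j => by
    rw [Matrix.mul_apply]
    refine IsUltrametricDist.norm_sum_le_of_forall_le_of_nonneg (mul_nonneg hr hs) fun a _ => ?_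
    rw [norm_mul]
    exact mul_le_mul (hA i a) (hB a j) (norm_nonneg _) hr

lemma Bd.one : Bd 1 (1 : Matrix (Fin n) (Fin n) ℚ_[p]) := fun i j => by
  rw [Matrix.one_apply]; split_ifs <;> simp

lemma Bd.of_sub_one (hA : Bd r (A - 1)) (hr : r ≤ 1) : Bd 1 A := by
  simpa using (hA.mono hr).add Bd.one

lemma Bd.mul_sub_one (hA : Bd r (A - 1)) (hB : Bd r (B - 1)) (h0 : 0 ≤ r) (h1 : r ≤ 1) :
    Bd r (A * B - 1) := by
  have h : A * B - 1 = A * (B - 1) + (A - 1) := by noncomm_ring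
  rw [h]
  refine Bd.add ?_ hA
  simpa using (hA.of_sub_one h1).mul hB zero_le_one h0

/-- A matrix congruent to `1` modulo `p` is invertible, with integral inverse. -/
lemma Bd.isUnit_det (hA : Bd r (A - 1)) (h1 : r < 1) :
    IsUnit A.det ∧ Bd 1 A⁻¹ := by
  have hA1 := hA.of_sub_one h1.le
  let A' : Matrix (Fin n) (Fin n) ℤ_[p] := Matrix.of fun i j => ⟨A i j, hA1 i j⟩
  have hAA : A = PadicInt.Coe.ringHom.mapMatrix A' := by ext i j; rfl
  have hred : PadicInt.toZMod.mapMatrix A' = 1 := by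
    ext i j
    have : A' i j - (1 : Matrix (Fin n) (Fin n) ℤ_[p]) i j ∈
        RingHom.ker (PadicInt.toZMod (p := p)) := by
      rw [PadicInt.ker_toZMod, IsLocalRing.mem_maximalIdeal, PadicInt.mem_nonunits]
      refine lt_of_le_of_lt (le_of_eq_of_le ?_ (hA i j)) h1
      rw [PadicInt.norm_def]
      congr 1
      rw [Matrix.sub_apply, Matrix.one_apply, Matrix.one_apply]
      split_ifs <;> simp [A'] <;> rfl
    rw [RingHom.mem_ker, map_sub, sub_eq_zero] at this
    rw [RingHom.mapMatrix_apply, Matrix.map_apply, this, Matrix.one_apply, Matrix.one_apply]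
    split_ifs <;> simp
  have hu : IsUnit A'.det := by
    rw [PadicInt.isUnit_iff]
    by_contra hne
    have hlt : ‖A'.det‖ < 1 := lt_of_le_of_ne (PadicInt.norm_le_one _) hne
    have hmem : A'.det ∈ RingHom.ker (PadicInt.toZMod (p := p)) := by
      rw [PadicInt.ker_toZMod, IsLocalRing.mem_maximalIdeal, PadicInt.mem_nonunits]
      exact hlt
    rw [RingHom.mem_ker, RingHom.map_det, hred, Matrix.det_one] at hmem
    exact one_ne_zero hmem
  refine ⟨?_, ?_⟩
  · rw [hAA, ← RingHom.map_det]; exact hu.map _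
  · have : A⁻¹ = PadicInt.Coe.ringHom.mapMatrix A'⁻¹ := by
      apply Matrix.inv_eq_right_inv
      rw [hAA, ← map_mul, Matrix.mul_nonsing_inv _ hu, map_one]
    rw [this]
    exact fun i j => PadicInt.norm_le_one (A'⁻¹ i j)

lemma Bd.inv_sub_one (hA : Bd r (A - 1)) (h0 : 0 ≤ r) (h1 : r < 1) : Bd r (A⁻¹ - 1) := by
  obtain ⟨hu, hb⟩ := hA.isUnit_det h1
  have : A⁻¹ - 1 = -(A⁻¹ * (A - 1)) := by
    rw [mul_sub, Matrix.nonsing_inv_mul _ hu, mul_one, neg_sub]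
  rw [this]
  simpa using (hb.mul hA zero_le_one h0).neg

/-- Block `UL` factorisation of a matrix `k` congruent to `1`, for the blocks given by the level
sets of `w`: a block-unipotent `N` makes `N * k` block lower triangular. Row `i` of `N` solves the
linear system whose matrix is `k` in the columns of weight `> w i` and `1` in the others. -/
lemma exists_block_ul {k : Matrix (Fin n) (Fin n) ℚ_[p]} (w : Fin n → ℕ)
    (hk : Bd r (k - 1)) (h0 : 0 ≤ r) (h1 : r < 1) :
    ∃ N : Matrix (Fin n) (Fin n) ℚ_[p],
      (∀ i j, w j ≤ w i → N i j = (1 : Matrix (Fin n) (Fin n) ℚ_[p]) i j) ∧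
      (∀ i j, w i < w j → (N * k) i j = 0) ∧ Bd r (N - 1) := by
  let K : Fin n → Matrix (Fin n) (Fin n) ℚ_[p] := fun i => Matrix.of fun a b =>
    if w i < w b then k a b else (1 : Matrix (Fin n) (Fin n) ℚ_[p]) a b
  have hK : ∀ i, Bd r (K i - 1) := fun i a b => by
    rw [Matrix.sub_apply]
    by_cases h : w i < w b
    · simpa [K, h] using hk a b
    · simpa [K, h] using h0
  have hKi : ∀ i b, ∑ a, (K i)⁻¹ i a * K i a b = (1 : Matrix (Fin n) (Fin n) ℚ_[p]) i b :=
    fun i b => by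
      rw [← Matrix.nonsing_inv_mul _ ((hK i).isUnit_det h1).1, Matrix.mul_apply]
  refine ⟨Matrix.of fun i j => (K i)⁻¹ i j, fun i j hij => ?_, fun i j hij => ?_, fun i j => ?_⟩
  · rw [← hKi i j, Matrix.of_apply]
    simp [K, not_lt.2 hij, Matrix.one_apply]
  · have h := hKi i j
    rw [Matrix.one_apply_ne (by rintro rfl; exact lt_irrefl _ hij)] at h
    rw [Matrix.mul_apply, ← h]
    simp [K, hij]
  · exact (hK i).inv_sub_one h0 h1 i j

/-- If `N` is block-unipotent for the level sets of `w`, then so is its inverse. -/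
lemma inv_block_unipotent {N : Matrix (Fin n) (Fin n) ℚ_[p]} (w : Fin n → ℕ) (hu : IsUnit N.det)
    (hN : ∀ i j, w j ≤ w i → N i j = (1 : Matrix (Fin n) (Fin n) ℚ_[p]) i j) :
    ∀ i j, w j ≤ w i → N⁻¹ i j = (1 : Matrix (Fin n) (Fin n) ℚ_[p]) i j := by
  have hT : N.BlockTriangular w := fun i j h => by
    rw [hN i j h.le, Matrix.one_apply_ne (by rintro rfl; exact lt_irrefl _ h)]
  let _ := Matrix.invertibleOfIsUnitDet N hu
  have hT' := Matrix.blockTriangular_inv_of_blockTriangular hT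
  intro i j hij
  rw [← Matrix.mul_nonsing_inv _ hu, Matrix.mul_apply, Finset.sum_eq_single i]
  · rw [hN i i le_rfl, Matrix.one_apply_eq, one_mul]
  · intro a _ hai
    rcases le_or_gt (w a) (w i) with h | h
    · rw [hN i a h, Matrix.one_apply_ne hai.symm, zero_mul]
    · rw [hT' (lt_of_le_of_lt hij h), mul_zero]
  · simp

lemma inv_block_lower {b : Matrix (Fin n) (Fin n) ℚ_[p]} (w : Fin n → ℕ) (hu : IsUnit b.det)
    (hb : ∀ i j, w i < w j → b i j = 0) : ∀ i j, w i < w j → b⁻¹ i j = 0 := by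
  have hT : b.BlockTriangular (fun i => OrderDual.toDual (w i)) := fun i j h =>
    hb i j (OrderDual.toDual_lt_toDual.1 h)
  let _ := Matrix.invertibleOfIsUnitDet b hu
  intro i j h
  exact Matrix.blockTriangular_inv_of_blockTriangular hT (OrderDual.toDual_lt_toDual.2 h)

end Bd

/-! ### The orthogonal group and its weight grading -/

/-- Block index of the flag stabilised by the parabolic with Levi factor `GL₁^{l-1} × SO₂`:
the two middle indices `l - 1` and `l` lie in the same block. -/
def wt (l : ℕ) (i : Fin (2*l)) : ℕ := if (i : ℕ) < l then i else i - 1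

lemma expo_eq (l m : ℕ) (i : Fin (2*l)) : expo l m i = 2 * m * ((wt l i : ℤ) - (l - 1)) := by
  have hi := i.2
  unfold expo wt
  split_ifs with h1 h2 h3 h3 h3
  · push_cast [Nat.cast_sub (show (i : ℕ) ≤ l - 1 by omega), Nat.cast_sub (show 1 ≤ l by omega)]
    ring
  · omega
  · omega
  · push_cast [Nat.cast_sub (show l ≤ (i : ℕ) by omega), Nat.cast_sub (show 1 ≤ (i : ℕ) by omega)]
    ring
  · have : (i : ℕ) = l - 1 := by omega
    rw [this, Nat.cast_sub (by omega)]; simp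
  · have : (i : ℕ) = l := by omega
    rw [this, Nat.cast_sub (by omega)]; simp

section Form

variable {F : Type*} [Field F] {l : ℕ} {ρ : F}

lemma Jrho_apply (i j : Fin (2*l)) : Jrho F l ρ i j =
    if (i : ℕ) = l - 1 ∧ (j.rev : ℕ) = l then 1
    else if (i : ℕ) = l ∧ (j.rev : ℕ) = l - 1 then -ρ
    else if i = j.rev ∧ ((i : ℕ) < l - 1 ∨ l + 1 ≤ (i : ℕ)) then 1
    else 0 := by
  unfold Jrho
  rw [Matrix.mul_apply, Finset.sum_eq_single j.rev]
  · have : ((j.rev : Fin (2*l)) : ℕ) + (j : ℕ) + 1 = 2 * l := by rw [Fin.val_rev]; omega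
    simp only [Jmat, Matrix.of_apply, this, if_true, mul_one]
  · intro a _ ha
    have : ¬ ((a : ℕ) + (j : ℕ) + 1 = 2 * l) := fun h => ha (by
      ext; rw [Fin.val_rev]; omega)
    simp only [Jmat, Matrix.of_apply, this, if_false, mul_zero]
  · simp

/-- The form is diagonal on the two middle basis vectors and antidiagonal on the others, so a sign
change of one middle vector preserves it. -/
lemma Jrho_ne_zero {i j : Fin (2*l)} (h : Jrho F l ρ i j ≠ 0) :
    i = j ∨ (i : ℕ) + j + 1 = 2 * l ∧ (i : ℕ) ≠ l - 1 ∧ (j : ℕ) ≠ l - 1 := by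
  rw [Jrho_apply] at h
  have hr := Fin.val_rev j
  have hj := j.2
  split_ifs at h with h1 h2 h3
  · left; ext; omega
  · left; ext; omega
  · right
    have := congrArg Fin.val h3.1
    omega
  · exact absurd rfl h

lemma Jrho_wt {i j : Fin (2*l)} (h : Jrho F l ρ i j ≠ 0) : wt l i + wt l j = 2 * (l - 1) := by
  rw [Jrho_apply] at h
  have hr := Fin.val_rev j
  have hj := j.2
  unfold wt
  split_ifs at h with h1 h2 h3
  · split_ifs <;> omega
  · split_ifs <;> omega
  · have := congrArg Fin.val h3.1
    split_ifs <;> omega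
  · exact absurd rfl h

lemma SO2l.isUnit {g : Matrix (Fin (2*l)) (Fin (2*l)) F} (hg : SO2l l ρ g) : IsUnit g.det := by
  rw [hg.1]; exact isUnit_one

lemma SO2l.one : SO2l l ρ (1 : Matrix (Fin (2*l)) (Fin (2*l)) F) := ⟨by simp, by simp⟩

lemma SO2l.mul {g h : Matrix (Fin (2*l)) (Fin (2*l)) F} (hg : SO2l l ρ g) (hh : SO2l l ρ h) :
    SO2l l ρ (g * h) := by
  refine ⟨by rw [Matrix.det_mul, hg.1, hh.1, one_mul], ?_⟩
  calc (g * h)ᵀ * Jrho F l ρ * (g * h) = hᵀ * (gᵀ * Jrho F l ρ * g) * h := by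
        rw [Matrix.transpose_mul]; simp only [Matrix.mul_assoc]
    _ = _ := by rw [hg.2, hh.2]

lemma SO2l.inv {g : Matrix (Fin (2*l)) (Fin (2*l)) F} (hg : SO2l l ρ g) : SO2l l ρ g⁻¹ := by
  have h1 := Matrix.mul_nonsing_inv g hg.isUnit
  refine ⟨by rw [Matrix.det_nonsing_inv, hg.1, Ring.inverse_one], ?_⟩
  calc g⁻¹ᵀ * Jrho F l ρ * g⁻¹ = g⁻¹ᵀ * (gᵀ * Jrho F l ρ * g) * g⁻¹ := by rw [hg.2]
    _ = (g * g⁻¹)ᵀ * Jrho F l ρ * (g * g⁻¹) := by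
        rw [Matrix.transpose_mul]; simp only [Matrix.mul_assoc]
    _ = _ := by rw [h1]; simp

/-- Conjugation by a diagonal matrix that preserves the form preserves the group. -/
lemma SO2l.conj_diagonal {g : Matrix (Fin (2*l)) (Fin (2*l)) F} (hg : SO2l l ρ g)
    (a b : Fin (2*l) → F) (hab : ∀ i, a i * b i = 1)
    (hJ : ∀ i j, Jrho F l ρ i j ≠ 0 → a i * a j = 1) :
    SO2l l ρ (Matrix.diagonal a * g * Matrix.diagonal b) := by
  have e1 : Matrix.diagonal a * Jrho F l ρ * Matrix.diagonal a = Jrho F l ρ := by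
    ext i j
    rw [Matrix.mul_diagonal, Matrix.diagonal_mul]
    by_cases h : Jrho F l ρ i j = 0
    · rw [h]; ring
    · linear_combination Jrho F l ρ i j * hJ i j h
  have e2 : Matrix.diagonal b * Jrho F l ρ * Matrix.diagonal b = Jrho F l ρ := by
    ext i j
    rw [Matrix.mul_diagonal, Matrix.diagonal_mul]
    by_cases h : Jrho F l ρ i j = 0
    · rw [h]; ring
    · have h1 : a i * b i * (a j * b j) = 1 := by rw [hab, hab, one_mul]
      linear_combination Jrho F l ρ i j * h1 - Jrho F l ρ i j * b i * b j * hJ i j h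
  refine ⟨?_, ?_⟩
  · have h1 : (∏ i, a i) * ∏ i, b i = 1 := by
      rw [← Finset.prod_mul_distrib]; exact Finset.prod_eq_one fun i _ => hab i
    rw [Matrix.det_mul, Matrix.det_mul, Matrix.det_diagonal, Matrix.det_diagonal, hg.1, mul_one, h1]
  · calc (Matrix.diagonal a * g * Matrix.diagonal b)ᵀ * Jrho F l ρ *
          (Matrix.diagonal a * g * Matrix.diagonal b)
        = Matrix.diagonal b * (gᵀ * (Matrix.diagonal a * Jrho F l ρ * Matrix.diagonal a) * g) *
            Matrix.diagonal b := by
          rw [Matrix.transpose_mul, Matrix.transpose_mul, Matrix.diagonal_transpose,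
            Matrix.diagonal_transpose]
          simp only [Matrix.mul_assoc]
      _ = _ := by rw [e1, hg.2, e2]

/-- A block-unipotent matrix and a block lower triangular matrix that transport the form to the
same form must fix it: by triangularity, the first transported form agrees with `J` in the positions
of weight at most `2 * (l - 1)`, and the second one vanishes, as `J` does, in the others. -/
lemma form_of_block_factor {N b : Matrix (Fin (2*l)) (Fin (2*l)) F}
    (hN : ∀ i j, wt l j ≤ wt l i → N i j = (1 : Matrix (Fin (2*l)) (Fin (2*l)) F) i j)
    (hb : ∀ i j, wt l i < wt l j → b i j = 0)
    (h : Nᵀ * Jrho F l ρ * N = bᵀ * Jrho F l ρ * b) :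
    Nᵀ * Jrho F l ρ * N = Jrho F l ρ := by
  have expand : ∀ (M : Matrix (Fin (2*l)) (Fin (2*l)) F) i j,
      (Mᵀ * Jrho F l ρ * M) i j = ∑ c, ∑ a, M a i * Jrho F l ρ a c * M c j := fun M i j => by
    simp only [Matrix.mul_apply, Matrix.transpose_apply, Finset.sum_mul]
  have hN0 : ∀ i j, wt l j < wt l i → N i j = 0 := fun i j hij => by
    rw [hN i j hij.le, Matrix.one_apply_ne (by rintro rfl; exact lt_irrefl _ hij)]
  ext i j
  rcases lt_or_ge (2 * (l - 1)) (wt l i + wt l j) with hlt | hge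
  · rw [h, expand]
    have hJ : Jrho F l ρ i j = 0 := by
      by_contra hJ
      have := Jrho_wt hJ
      omega
    rw [hJ]
    refine Finset.sum_eq_zero fun c _ => Finset.sum_eq_zero fun a _ => ?_
    by_cases hJ' : Jrho F l ρ a c = 0
    · simp [hJ']
    have := Jrho_wt hJ'
    rcases lt_or_ge (wt l a) (wt l i) with h1 | h1
    · simp [hb a i h1]
    · simp [hb c j (by omega)]
  · rw [expand]
    have key : ∀ c a, N a i * Jrho F l ρ a c * N c j =
        (1 : Matrix (Fin (2*l)) (Fin (2*l)) F) a i * Jrho F l ρ a c *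
          (1 : Matrix (Fin (2*l)) (Fin (2*l)) F) c j := fun c a => by
      by_cases hJ' : Jrho F l ρ a c = 0
      · simp [hJ']
      have hw := Jrho_wt hJ'
      rcases lt_or_ge (wt l a) (wt l i) with h1 | h1
      · rw [hN0 c j (by omega), Matrix.one_apply_ne (i := c) (by rintro rfl; omega)]
        simp
      rcases lt_or_ge (wt l c) (wt l j) with h2 | h2
      · rw [hN0 a i (by omega), Matrix.one_apply_ne (i := a) (by rintro rfl; omega)]
        simp
      rw [hN a i h1, hN c j h2]
    simp only [key]
    simp [Matrix.one_apply]

end Form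

/-! ### The groups `K_m`, `H_m`, `U_m` -/

section Groups

lemma r_nonneg {p : ℕ} (m : ℕ) : (0 : ℝ) ≤ (p : ℝ) ^ (-(m : ℤ)) := by positivity

variable {p : ℕ} [Fact p.Prime] {l m : ℕ} {ρ : ℚ_[p]}

lemma p_ne : (p : ℚ_[p]) ≠ 0 := by exact_mod_cast (Fact.out : p.Prime).ne_zero

lemma one_lt_p : (1 : ℝ) < p := by exact_mod_cast (Fact.out : p.Prime).one_lt

lemma r_lt_one (hm : 1 ≤ m) : (p : ℝ) ^ (-(m : ℤ)) < 1 :=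
  zpow_lt_one_of_neg₀ one_lt_p (by omega)

lemma r_mono {m n : ℕ} (h : m ≤ n) : (p : ℝ) ^ (-(n : ℤ)) ≤ (p : ℝ) ^ (-(m : ℤ)) :=
  zpow_le_zpow_right₀ one_lt_p.le (by omega)

lemma ematInv_mul_emat : ematInv p l m * emat p l m = 1 := by
  unfold ematInv emat
  rw [Matrix.diagonal_mul_diagonal, ← Matrix.diagonal_one]
  congr 1; funext i
  rw [← zpow_add₀ p_ne, neg_add_cancel, zpow_zero]

lemma emat_mul_ematInv : emat p l m * ematInv p l m = 1 :=
  mul_eq_one_comm.1 ematInv_mul_emat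

lemma ematInv_conj_apply (h : Matrix (Fin (2*l)) (Fin (2*l)) ℚ_[p]) (i j : Fin (2*l)) :
    (ematInv p l m * h * emat p l m) i j = (p : ℚ_[p]) ^ (expo l m j - expo l m i) * h i j := by
  unfold ematInv emat
  rw [Matrix.mul_diagonal, Matrix.diagonal_mul, sub_eq_neg_add, zpow_add₀ p_ne]
  ring

lemma emat_conj_apply (h : Matrix (Fin (2*l)) (Fin (2*l)) ℚ_[p]) (i j : Fin (2*l)) :
    (emat p l m * h * ematInv p l m) i j = (p : ℚ_[p]) ^ (expo l m i - expo l m j) * h i j := by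
  unfold ematInv emat
  rw [Matrix.mul_diagonal, Matrix.diagonal_mul, sub_eq_add_neg, zpow_add₀ p_ne]
  ring

lemma ematInv_emat_conj (h : Matrix (Fin (2*l)) (Fin (2*l)) ℚ_[p]) :
    ematInv p l m * (emat p l m * h * ematInv p l m) * emat p l m = h := by
  calc _ = (ematInv p l m * emat p l m) * h * (ematInv p l m * emat p l m) := by
        simp only [Matrix.mul_assoc]
    _ = h := by rw [ematInv_mul_emat]; simp

lemma emat_ematInv_conj (h : Matrix (Fin (2*l)) (Fin (2*l)) ℚ_[p]) :
    emat p l m * (ematInv p l m * h * emat p l m) * ematInv p l m = h := by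
  calc _ = (emat p l m * ematInv p l m) * h * (emat p l m * ematInv p l m) := by
        simp only [Matrix.mul_assoc]
    _ = h := by rw [emat_mul_ematInv]; simp

lemma ematInv_conj_mul (g h : Matrix (Fin (2*l)) (Fin (2*l)) ℚ_[p]) :
    ematInv p l m * (g * h) * emat p l m =
      (ematInv p l m * g * emat p l m) * (ematInv p l m * h * emat p l m) := by
  calc _ = ematInv p l m * g * 1 * h * emat p l m := by simp only [Matrix.mul_assoc, mul_one]
    _ = _ := by rw [← emat_mul_ematInv (m := m)]; simp only [Matrix.mul_assoc]

lemma emat_conj_mul (g h : Matrix (Fin (2*l)) (Fin (2*l)) ℚ_[p]) :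
    emat p l m * (g * h) * ematInv p l m =
      (emat p l m * g * ematInv p l m) * (emat p l m * h * ematInv p l m) := by
  calc _ = emat p l m * g * 1 * h * ematInv p l m := by simp only [Matrix.mul_assoc, mul_one]
    _ = _ := by rw [← ematInv_mul_emat (m := m)]; simp only [Matrix.mul_assoc]

lemma expo_add_of_Jrho (hl : 1 ≤ l) {i j : Fin (2*l)} (h : Jrho ℚ_[p] l ρ i j ≠ 0) :
    expo l m i + expo l m j = 0 := by
  have h1 : (wt l i : ℤ) + wt l j = 2 * ((l : ℤ) - 1) := by have := Jrho_wt h; omega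
  rw [expo_eq, expo_eq]
  linear_combination 2 * (m : ℤ) * h1

lemma SO2l.emat_conj (hl : 1 ≤ l) {g : Matrix (Fin (2*l)) (Fin (2*l)) ℚ_[p]} (hg : SO2l l ρ g) :
    SO2l l ρ (emat p l m * g * ematInv p l m) := by
  refine hg.conj_diagonal _ _ (fun i => ?_) fun i j hij => ?_
  · rw [← zpow_add₀ p_ne, add_neg_cancel, zpow_zero]
  · rw [← zpow_add₀ p_ne, expo_add_of_Jrho hl hij, zpow_zero]

lemma Km_iff {g : Matrix (Fin (2*l)) (Fin (2*l)) ℚ_[p]} :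
    Km p l m ρ g ↔ SO2l l ρ g ∧ Bd ((p : ℝ) ^ (-(m : ℤ))) (g - 1) := by
  unfold Km Bd
  simp only [Matrix.sub_apply, Matrix.one_apply]

lemma Km.one : Km p l m ρ 1 := by
  rw [Km_iff]
  exact ⟨SO2l.one, fun i j => by simp⟩

lemma Km.mul {g h : Matrix (Fin (2*l)) (Fin (2*l)) ℚ_[p]} (hm : 1 ≤ m) (hg : Km p l m ρ g)
    (hh : Km p l m ρ h) : Km p l m ρ (g * h) := by
  rw [Km_iff] at *
  exact ⟨hg.1.mul hh.1, hg.2.mul_sub_one hh.2 (r_nonneg m) (r_lt_one hm).le⟩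

lemma Km.inv {g : Matrix (Fin (2*l)) (Fin (2*l)) ℚ_[p]} (hm : 1 ≤ m) (hg : Km p l m ρ g) :
    Km p l m ρ g⁻¹ := by
  rw [Km_iff] at *
  exact ⟨hg.1.inv, hg.2.inv_sub_one (r_nonneg m) (r_lt_one hm)⟩

lemma Km.mono {m n : ℕ} (h : m ≤ n) {g : Matrix (Fin (2*l)) (Fin (2*l)) ℚ_[p]}
    (hg : Km p l n ρ g) : Km p l m ρ g :=
  ⟨hg.1, fun i j => (hg.2 i j).trans (r_mono h)⟩

lemma Hm.so (hl : 1 ≤ l) {h : Matrix (Fin (2*l)) (Fin (2*l)) ℚ_[p]} (hh : Hm p l m ρ h) :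
    SO2l l ρ h := by
  rw [← emat_ematInv_conj (m := m) h]
  exact SO2l.emat_conj hl hh.1

lemma Hm.one : Hm p l m ρ 1 := by
  unfold Hm
  rw [mul_one, ematInv_mul_emat]
  exact Km.one

lemma Hm.mul {g h : Matrix (Fin (2*l)) (Fin (2*l)) ℚ_[p]} (hm : 1 ≤ m) (hg : Hm p l m ρ g)
    (hh : Hm p l m ρ h) : Hm p l m ρ (g * h) := by
  unfold Hm
  rw [ematInv_conj_mul]
  exact Km.mul hm hg hh

lemma Hm.inv (hl : 1 ≤ l) {h : Matrix (Fin (2*l)) (Fin (2*l)) ℚ_[p]} (hm : 1 ≤ m)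
    (hh : Hm p l m ρ h) : Hm p l m ρ h⁻¹ := by
  have h1 : (ematInv p l m * h * emat p l m)⁻¹ = ematInv p l m * h⁻¹ * emat p l m := by
    apply Matrix.inv_eq_right_inv
    rw [← ematInv_conj_mul, Matrix.mul_nonsing_inv _ (hh.so hl).isUnit, mul_one, ematInv_mul_emat]
  have h2 := Km.inv hm hh
  rwa [h1] at h2

lemma wt_mono {i j : Fin (2*l)} (h : (i : ℕ) ≤ j) : wt l i ≤ wt l j := by
  unfold wt; split_ifs <;> omega

/-- Iwahori-type factorisation: `H_m = U_m · (H_m ∩ K_m)`. Conjugation by `e_m` contracts the block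
lower triangular part, which therefore stays inside `K_m`. -/
lemma Hm.factor (hl : 1 ≤ l) (hm : 1 ≤ m) {h : Matrix (Fin (2*l)) (Fin (2*l)) ℚ_[p]}
    (hh : Hm p l m ρ h) :
    ∃ u b, Um p l m ρ u ∧ Hm p l m ρ b ∧ Km p l m ρ b ∧ h = u * b := by
  set k := ematInv p l m * h * emat p l m with hkdef
  obtain ⟨hkS, hkB⟩ := Km_iff.1 hh
  have r0 := r_nonneg (p := p) m
  have r1 := r_lt_one (p := p) hm
  obtain ⟨N, hN1, hN2, hN3⟩ := exists_block_ul (wt l) hkB r0 r1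
  have hNu := (hN3.isUnit_det r1).1
  have hNinv := inv_block_unipotent (wt l) hNu hN1
  set b := N * k with hb
  have hbB : Bd _ (b - 1) := hN3.mul_sub_one hkB r0 r1.le
  have hbu := (hbB.isUnit_det r1).1
  have hbl := inv_block_lower (wt l) hbu hN2
  have hkN : k = N⁻¹ * b := by rw [hb, Matrix.nonsing_inv_mul_cancel_left _ _ hNu]
  have hform : N⁻¹ᵀ * Jrho ℚ_[p] l ρ * N⁻¹ = Jrho ℚ_[p] l ρ := by
    -- `b⁻¹ = k⁻¹ * N⁻¹` transports the form exactly as `N⁻¹` does, because `k` preserves it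
    refine form_of_block_factor hNinv hbl ?_
    have : b⁻¹ = k⁻¹ * N⁻¹ := by rw [hb, Matrix.mul_inv_rev]
    rw [this, Matrix.transpose_mul]
    calc N⁻¹ᵀ * Jrho ℚ_[p] l ρ * N⁻¹ = N⁻¹ᵀ * (k⁻¹ᵀ * Jrho ℚ_[p] l ρ * k⁻¹) * N⁻¹ := by
          rw [hkS.inv.2]
      _ = _ := by simp only [Matrix.mul_assoc]
  have hdet : N⁻¹.det = 1 := by
    rw [Matrix.det_of_isUpperTriangular]
    · exact Finset.prod_eq_one fun i _ => by rw [hNinv i i le_rfl, Matrix.one_apply_eq]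
    · intro i j hij
      have hij' : j < i := hij
      rw [hNinv i j (wt_mono hij'.le), Matrix.one_apply_ne hij'.ne']
  have hNS : SO2l l ρ N⁻¹ := ⟨hdet, hform⟩
  have hNB := hN3.inv_sub_one r0 r1
  have hbS : SO2l l ρ b := by
    have := hNS.inv.mul hkS
    rwa [Matrix.nonsing_inv_nonsing_inv _ hNu] at this
  refine ⟨emat p l m * N⁻¹ * ematInv p l m, emat p l m * b * ematInv p l m,
    ⟨⟨hNS.emat_conj hl, fun i j hij => ?_, fun i => ?_⟩, ?_⟩, ?_, ?_, ?_⟩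
  · rw [emat_conj_apply, hNinv i j (wt_mono hij.le),
      Matrix.one_apply_ne (by rintro rfl; exact lt_irrefl _ hij), mul_zero]
  · rw [emat_conj_apply, hNinv i i le_rfl, Matrix.one_apply_eq, sub_self, zpow_zero, one_mul]
  · unfold Hm; rw [ematInv_emat_conj, Km_iff]; exact ⟨hNS, hNB⟩
  · unfold Hm; rw [ematInv_emat_conj, Km_iff]; exact ⟨hbS, hbB⟩
  · rw [Km_iff]
    refine ⟨hbS.emat_conj hl, fun i j => ?_⟩
    rw [Matrix.sub_apply, emat_conj_apply]
    by_cases hij : i = j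
    · subst hij
      simpa using hbB i i
    rcases lt_or_ge (wt l i) (wt l j) with h1 | h1
    · rw [hN2 i j h1, mul_zero, Matrix.one_apply_ne hij]
      simp
    · have hbij := hbB i j
      rw [Matrix.sub_apply, Matrix.one_apply_ne hij, sub_zero] at hbij
      rw [Matrix.one_apply_ne hij, sub_zero, norm_mul, Padic.norm_p_zpow]
      have he : 0 ≤ expo l m i - expo l m j := by
        rw [expo_eq, expo_eq, ← mul_sub]
        have : (wt l j : ℤ) ≤ wt l i := by exact_mod_cast h1
        exact mul_nonneg (by positivity) (by linarith)
      calc _ ≤ 1 * (p : ℝ) ^ (-(m : ℤ)) :=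
            mul_le_mul (zpow_le_one_of_nonpos₀ one_lt_p.le (by omega)) hbij (norm_nonneg _)
              zero_le_one
        _ = _ := one_mul _
  · rw [← emat_conj_mul, ← hkN, hkdef, emat_ematInv_conj]

/-- `e_m K_N e_m⁻¹` is contained in `K_m` for `N = m + 4ml`: conjugation by `e_m` multiplies entries
by at most `p ^ (4ml)` in absolute value. -/
lemma Km.of_congr {h : Matrix (Fin (2*l)) (Fin (2*l)) ℚ_[p]} (hS : SO2l l ρ h)
    (hB : Bd ((p : ℝ) ^ (-((m + 4 * m * l : ℕ) : ℤ)))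
      (ematInv p l m * h * emat p l m - 1)) : Km p l m ρ h := by
  rw [Km_iff]
  refine ⟨hS, fun i j => ?_⟩
  have h1 : h - 1 = emat p l m * (ematInv p l m * h * emat p l m - 1) * ematInv p l m := by
    rw [mul_sub, sub_mul, emat_ematInv_conj, mul_one, emat_mul_ematInv]
  rw [h1, emat_conj_apply, norm_mul, Padic.norm_p_zpow]
  have hw : ∀ i : Fin (2*l), wt l i ≤ 2 * l := fun i => by
    have := i.2; unfold wt; split_ifs <;> omega
  have he : -(expo l m i - expo l m j) ≤ 4 * m * l := by
    rw [expo_eq, expo_eq]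
    have h2 : (wt l j : ℤ) - wt l i ≤ 2 * l := by have := hw j; omega
    nlinarith [mul_le_mul_of_nonneg_left h2 (show (0 : ℤ) ≤ 2 * m by positivity)]
  calc _ ≤ (p : ℝ) ^ (4 * m * l : ℤ) * (p : ℝ) ^ (-((m + 4 * m * l : ℕ) : ℤ)) :=
        mul_le_mul (zpow_le_zpow_right₀ one_lt_p.le he) (hB i j) (norm_nonneg _) (by positivity)
    _ = _ := by
        rw [← zpow_add₀ (by linarith [one_lt_p (p := p)])]
        congr 1; push_cast; ring

end Groups

/-! ### The characters -/

section Characters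

/-- `λ` only involves entries that raise the weight by one and avoid the index `l - 1`. The last
feature makes it insensitive to the sign change at that index. -/
lemma lamU_smul_of {F : Type*} [Field F] {l : ℕ} (hl : 2 ≤ l) (c : F)
    {g h : Matrix (Fin (2*l)) (Fin (2*l)) F}
    (H : ∀ i j : Fin (2*l), wt l j = wt l i + 1 → (i : ℕ) ≠ l - 1 → (j : ℕ) ≠ l - 1 →
      g i j = c * h i j) :
    lamU l g = c * lamU l h := by
  have hent : ∀ i j : ℕ, ∀ hi : i < 2 * l, ∀ hj : j < 2 * l,
      wt l ⟨j, hj⟩ = wt l ⟨i, hi⟩ + 1 → i ≠ l - 1 → j ≠ l - 1 → ent g i j = c * ent h i j := by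
    intro i j hi hj hw h1 h2
    unfold ent
    rw [dif_pos ⟨hi, hj⟩, dif_pos ⟨hi, hj⟩]
    exact H _ _ hw h1 h2
  unfold lamU
  rw [hent (l - 2) l (by omega) (by omega)
    (by simp only [wt]; split_ifs <;> omega) (by omega) (by omega), mul_add, Finset.mul_sum]
  congr 1
  · refine Finset.sum_congr rfl fun i hi => ?_
    rw [Finset.mem_range] at hi
    exact hent i (i + 1) (by omega) (by omega)
      (by simp only [wt]; split_ifs <;> omega) (by omega) (by omega)
  · ring

lemma lamU_sub {F : Type*} [Field F] {l : ℕ} (g h : Matrix (Fin (2*l)) (Fin (2*l)) F) :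
    lamU l (g - h) = lamU l g - lamU l h := by
  have hent : ∀ i j : ℕ, ent (g - h) i j = ent g i j - ent h i j := fun i j => by
    unfold ent; split_ifs <;> simp
  unfold lamU
  simp only [hent, Finset.sum_sub_distrib]
  ring

variable {p : ℕ} [Fact p.Prime] {l m : ℕ} {ρ : ℚ_[p]}

lemma norm_lamU_le (hp : p ≠ 2) (hl : 2 ≤ l) {r : ℝ} (hr : 0 ≤ r)
    {g : Matrix (Fin (2*l)) (Fin (2*l)) ℚ_[p]} (hg : ∀ i j, i ≠ j → ‖g i j‖ ≤ r) :
    ‖lamU l g‖ ≤ r := by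
  have hent : ∀ i j : ℕ, i ≠ j → ‖ent g i j‖ ≤ r := fun i j hij => by
    unfold ent
    split_ifs with h
    · exact hg _ _ fun h' => hij (congrArg Fin.val h')
    · simpa using hr
  have h2 : ‖(1 / 2 : ℚ_[p])‖ = 1 := by
    have : ‖((2 : ℕ) : ℚ_[p])‖ = 1 := by
      rw [Padic.norm_natCast_eq_one_iff]
      exact (Nat.coprime_primes Fact.out Nat.prime_two).2 hp
    push_cast at this
    rw [norm_div, norm_one, this, div_one]
  unfold lamU
  refine (IsUltrametricDist.norm_add_le_max _ _).trans (max_le ?_ ?_)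
  · exact IsUltrametricDist.norm_sum_le_of_forall_le_of_nonneg hr fun i _ => hent _ _ (by omega)
  · rw [norm_mul, h2, one_mul]; exact hent _ _ (by omega)

lemma lamU_conj_e (hl : 2 ≤ l) (h : Matrix (Fin (2*l)) (Fin (2*l)) ℚ_[p]) :
    lamU l (ematInv p l m * h * emat p l m) = (p : ℚ_[p]) ^ (2 * m : ℤ) * lamU l h := by
  refine lamU_smul_of hl _ fun i j hw _ _ => ?_
  rw [ematInv_conj_apply, expo_eq, expo_eq, hw]
  congr 2
  push_cast; ring

/-- The power of `p` in `τ_m` cancels the scaling by `e_m`: `ψ_m` is `ψ₀ ∘ λ`. -/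
lemma psim_eq (hl : 2 ≤ l) (ψ₀ : AddChar ℚ_[p] ℂˣ) (h : Matrix (Fin (2*l)) (Fin (2*l)) ℚ_[p]) :
    psim p l m ψ₀ h = ψ₀ (lamU l h) := by
  unfold psim taum
  rw [lamU_conj_e hl, ← mul_assoc, ← zpow_add₀ p_ne, neg_add_cancel, zpow_zero, one_mul]

lemma AddChar.eq_of_norm_sub_le {ψ₀ : AddChar ℚ_[p] ℂˣ} (hψ1 : ∀ x : ℚ_[p], ‖x‖ ≤ 1 → ψ₀ x = 1)
    {x y : ℚ_[p]} (h : ‖x - y‖ ≤ 1) : ψ₀ x = ψ₀ y := by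
  have := ψ₀.map_add_eq_mul (x - y) y
  rwa [sub_add_cancel, hψ1 _ h, one_mul] at this

/-- `ψ_m` is a character of `H_m`: on `K_m`, the linear form `λ` is additive modulo `p ^ (2m)`. -/
lemma psim_mul (hp : p ≠ 2) (hl : 2 ≤ l) {ψ₀ : AddChar ℚ_[p] ℂˣ}
    (hψ1 : ∀ x : ℚ_[p], ‖x‖ ≤ 1 → ψ₀ x = 1) {g h : Matrix (Fin (2*l)) (Fin (2*l)) ℚ_[p]}
    (hg : Hm p l m ρ g) (hh : Hm p l m ρ h) :
    psim p l m ψ₀ (g * h) = psim p l m ψ₀ g * psim p l m ψ₀ h := by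
  have hg' := (Km_iff.1 hg).2
  have hh' := (Km_iff.1 hh).2
  rw [psim_eq hl, psim_eq hl, psim_eq hl, ← AddChar.map_add_eq_mul]
  apply AddChar.eq_of_norm_sub_le hψ1
  set a := ematInv p l m * g * emat p l m with ha
  set b := ematInv p l m * h * emat p l m with hb
  have r0 := r_nonneg (p := p) m
  have key : ‖lamU l (a * b - a - b)‖ ≤ (p : ℝ) ^ (-(m : ℤ)) * (p : ℝ) ^ (-(m : ℤ)) := by
    refine norm_lamU_le hp hl (mul_nonneg r0 r0) fun i j hij => ?_
    have : (a * b - a - b) i j = ((a - 1) * (b - 1)) i j := by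
      have h1 : a * b - a - b = (a - 1) * (b - 1) - 1 := by noncomm_ring
      rw [h1, Matrix.sub_apply, Matrix.one_apply_ne hij, sub_zero]
    rw [this]
    exact hg'.mul hh' r0 r0 i j
  have h2 : lamU l (a * b - a - b) =
      (p : ℚ_[p]) ^ (2 * m : ℤ) * (lamU l (g * h) - (lamU l g + lamU l h)) := by
    rw [lamU_sub, lamU_sub, ha, hb, ← ematInv_conj_mul, lamU_conj_e hl, lamU_conj_e hl,
      lamU_conj_e hl]
    ring
  rw [h2, norm_mul, Padic.norm_p_zpow, ← zpow_add₀ (by linarith [one_lt_p (p := p)])] at key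
  have hpos : (0 : ℝ) < (p : ℝ) ^ (-(2 * m : ℤ)) := by
    have := one_lt_p (p := p); positivity
  have h3 : (-(m : ℤ) + -(m : ℤ)) = -(2 * m : ℤ) := by ring
  rw [h3] at key
  exact le_of_mul_le_mul_left (by rwa [mul_one]) hpos

lemma psim_eq_one_of_Km (hp : p ≠ 2) (hl : 2 ≤ l) (hm : 1 ≤ m) {ψ₀ : AddChar ℚ_[p] ℂˣ}
    (hψ1 : ∀ x : ℚ_[p], ‖x‖ ≤ 1 → ψ₀ x = 1) {h : Matrix (Fin (2*l)) (Fin (2*l)) ℚ_[p]}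
    (hh : Km p l m ρ h) : psim p l m ψ₀ h = 1 := by
  rw [psim_eq hl]
  exact hψ1 _ (norm_lamU_le hp hl zero_le_one fun i j _ =>
    (Km_iff.1 hh).2.of_sub_one (r_lt_one hm).le i j)

end Characters

/-! ### Conjugation by `c t̃⁻¹` -/

section Conj

variable {p : ℕ} [Fact p.Prime] {l m : ℕ} {ρ : ℚ_[p]}

/-- The diagonal entries of `c t̃⁻¹ = diag(I_{l-1}, -1, 1, I_{l-1})`. -/
def sgn (p l : ℕ) [Fact p.Prime] (i : Fin (2*l)) : ℚ_[p] := if (i : ℕ) = l - 1 then -1 else 1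

/-- Conjugation by the involution `c t̃⁻¹`. -/
def phi (g : Matrix (Fin (2*l)) (Fin (2*l)) ℚ_[p]) : Matrix (Fin (2*l)) (Fin (2*l)) ℚ_[p] :=
  Matrix.diagonal (sgn p l) * g * Matrix.diagonal (sgn p l)

lemma sgn_sq (i : Fin (2*l)) : sgn p l i * sgn p l i = 1 := by
  unfold sgn; split_ifs <;> simp

lemma conjW_eq (hl : 1 ≤ l) (W : Matrix (Fin (2*l)) (Fin (2*l)) ℚ_[p] → ℂ)
    (g : Matrix (Fin (2*l)) (Fin (2*l)) ℚ_[p]) : conjW p l W g = W (phi g) := by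
  have ht : (ttildeMat ℚ_[p] l)⁻¹ = ttildeMat ℚ_[p] l := by
    apply Matrix.inv_eq_right_inv
    unfold ttildeMat
    rw [Matrix.diagonal_mul_diagonal, ← Matrix.diagonal_one]
    congr 1; funext i; split_ifs <;> simp
  have h1 : cmat ℚ_[p] l * ttildeMat ℚ_[p] l = Matrix.diagonal (sgn p l) := by
    unfold cmat ttildeMat
    rw [Matrix.diagonal_mul_diagonal]
    congr 1; funext i
    unfold sgn
    split_ifs <;> first | omega | simp
  have h2 : ttildeMat ℚ_[p] l * cmat ℚ_[p] l = Matrix.diagonal (sgn p l) := by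
    rw [← h1]
    unfold cmat ttildeMat
    rw [Matrix.diagonal_mul_diagonal, Matrix.diagonal_mul_diagonal]
    congr 1; funext i; ring
  unfold conjW phi
  rw [ht, h1, Matrix.mul_assoc _ (ttildeMat ℚ_[p] l), h2]

lemma phi_apply (g : Matrix (Fin (2*l)) (Fin (2*l)) ℚ_[p]) (i j : Fin (2*l)) :
    phi g i j = sgn p l i * g i j * sgn p l j := by
  unfold phi
  rw [Matrix.mul_diagonal, Matrix.diagonal_mul]

lemma sgn_mat_sq : Matrix.diagonal (sgn p l) * Matrix.diagonal (sgn p l) = 1 := by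
  rw [Matrix.diagonal_mul_diagonal, ← Matrix.diagonal_one]
  congr 1; funext i; exact sgn_sq i

lemma phi_phi (g : Matrix (Fin (2*l)) (Fin (2*l)) ℚ_[p]) : phi (phi g) = g := by
  ext i j
  rw [phi_apply, phi_apply]
  linear_combination g i j * sgn p l j * sgn p l j * sgn_sq (p := p) i + g i j * sgn_sq (p := p) j

lemma phi_mul (g h : Matrix (Fin (2*l)) (Fin (2*l)) ℚ_[p]) : phi (g * h) = phi g * phi h := by
  unfold phi
  calc _ = Matrix.diagonal (sgn p l) * g * 1 * h * Matrix.diagonal (sgn p l) := by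
        simp only [Matrix.mul_assoc, mul_one]
    _ = _ := by rw [← sgn_mat_sq]; simp only [Matrix.mul_assoc]

lemma phi_one : phi (1 : Matrix (Fin (2*l)) (Fin (2*l)) ℚ_[p]) = 1 := by
  unfold phi; rw [mul_one, sgn_mat_sq]

lemma norm_phi_apply (g : Matrix (Fin (2*l)) (Fin (2*l)) ℚ_[p]) (i j : Fin (2*l)) :
    ‖phi g i j‖ = ‖g i j‖ := by
  rw [phi_apply]; unfold sgn; split_ifs <;> simp

lemma SO2l.phi {g : Matrix (Fin (2*l)) (Fin (2*l)) ℚ_[p]} (hg : SO2l l ρ g) :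
    SO2l l ρ (phi g) := by
  refine hg.conj_diagonal _ _ sgn_sq fun i j hij => ?_
  rcases Jrho_ne_zero hij with rfl | ⟨-, h1, h2⟩
  · exact sgn_sq i
  · simp [sgn, h1, h2]

lemma USO2l.phi {g : Matrix (Fin (2*l)) (Fin (2*l)) ℚ_[p]} (hg : USO2l l ρ g) :
    USO2l l ρ (phi g) := by
  refine ⟨hg.1.phi, fun i j hij => ?_, fun i => ?_⟩
  · rw [phi_apply, hg.2.1 i j hij]; ring
  · rw [phi_apply, hg.2.2 i, mul_one, sgn_sq]

lemma Km.phi {g : Matrix (Fin (2*l)) (Fin (2*l)) ℚ_[p]} (hg : Km p l m ρ g) :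
    Km p l m ρ (phi g) := by
  rw [Km_iff] at *
  refine ⟨hg.1.phi, fun i j => ?_⟩
  have : _root_.phi g - 1 = _root_.phi (g - 1) := by
    conv_lhs => rw [← phi_one]
    simp only [_root_.phi, mul_sub, sub_mul]
  rw [this, norm_phi_apply]
  exact hg.2 i j

lemma phi_ematInv_conj (h : Matrix (Fin (2*l)) (Fin (2*l)) ℚ_[p]) :
    phi (ematInv p l m * h * emat p l m) = ematInv p l m * phi h * emat p l m := by
  ext i j
  rw [phi_apply, ematInv_conj_apply, ematInv_conj_apply, phi_apply]
  ring

lemma Um.phi {g : Matrix (Fin (2*l)) (Fin (2*l)) ℚ_[p]} (hg : Um p l m ρ g) :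
    Um p l m ρ (phi g) := by
  refine ⟨hg.1.phi, ?_⟩
  have := Km.phi hg.2
  rwa [phi_ematInv_conj] at this

lemma lamU_phi (hl : 2 ≤ l) (g : Matrix (Fin (2*l)) (Fin (2*l)) ℚ_[p]) :
    lamU l (phi g) = lamU l g := by
  rw [← one_mul (lamU l g)]
  refine lamU_smul_of hl 1 fun i j _ h1 h2 => ?_
  rw [phi_apply]
  simp [sgn, h1, h2]

end Conj

/-! ### Cosets of `H_m ∩ K_m` in `H_m` -/

section Cosets

variable {p : ℕ} [Fact p.Prime] {l m : ℕ}

/-- `H_m` as a subgroup of `GL_{2l}(ℚ_p)`. -/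
def Hgrp (p : ℕ) [Fact p.Prime] {l m : ℕ} (hl : 1 ≤ l) (hm : 1 ≤ m) (ρ : ℚ_[p]) :
    Subgroup (GL (Fin (2*l)) ℚ_[p]) where
  carrier := {g | Hm p l m ρ g}
  one_mem' := Hm.one
  mul_mem' := fun ha hb => Hm.mul hm ha hb
  inv_mem' := fun {x} ha => by
    rw [Set.mem_ofPred_eq, Matrix.coe_units_inv]
    exact Hm.inv hl hm ha

/-- The matrix underlying an element of `H_m`. -/
def toMat {hl : 1 ≤ l} {hm : 1 ≤ m} {ρ : ℚ_[p]} (x : Hgrp p hl hm ρ) :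
    Matrix (Fin (2*l)) (Fin (2*l)) ℚ_[p] := ((x : GL (Fin (2*l)) ℚ_[p]) : Matrix _ _ _)

lemma toMat_inv {hl : 1 ≤ l} {hm : 1 ≤ m} {ρ : ℚ_[p]} (x : Hgrp p hl hm ρ) :
    toMat x⁻¹ = (toMat x)⁻¹ := by
  unfold toMat
  rw [Subgroup.coe_inv, Matrix.coe_units_inv]

/-- `H_m ∩ K_m` as a subgroup of `H_m`. -/
def Lgrp (p : ℕ) [Fact p.Prime] {l m : ℕ} (hl : 1 ≤ l) (hm : 1 ≤ m) (ρ : ℚ_[p]) :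
    Subgroup (Hgrp p hl hm ρ) where
  carrier := {g | Km p l m ρ (toMat g)}
  one_mem' := Km.one
  mul_mem' := fun {a b} ha hb =>
    show Km p l m ρ (toMat a * toMat b) from Km.mul hm ha hb
  inv_mem' := fun {x} ha => by
    rw [Set.mem_ofPred_eq, toMat_inv]
    exact Km.inv hm ha

variable {hl : 1 ≤ l} {hm : 1 ≤ m} {ρ : ℚ_[p]}

lemma toMat_Hm (x : Hgrp p hl hm ρ) : Hm p l m ρ (toMat x) := x.2

lemma toMat_mul (x y : Hgrp p hl hm ρ) : toMat (x * y) = toMat x * toMat y := rfl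

lemma exists_toMat {h : Matrix (Fin (2*l)) (Fin (2*l)) ℚ_[p]} (hh : Hm p l m ρ h) :
    ∃ x : Hgrp p hl hm ρ, toMat x = h :=
  ⟨⟨Matrix.nonsingInvUnit h (hh.so hl).isUnit, hh⟩, rfl⟩

lemma mem_Lgrp (x : Hgrp p hl hm ρ) : x ∈ Lgrp p hl hm ρ ↔ Km p l m ρ (toMat x) := Iff.rfl

/-- `H_m ∩ K_m` has finite index in `H_m`: a coset is determined by the entries of
`e_m⁻¹ * h * e_m` modulo a large power of `p`. -/
instance finite_quotient : Finite (Hgrp p hl hm ρ ⧸ Lgrp p hl hm ρ) := by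
  set N := m + 4 * m * l with hN
  have : NeZero (p ^ N) := ⟨(pow_pos (Fact.out : p.Prime).pos N).ne'⟩
  have hint : ∀ x : Hgrp p hl hm ρ, Bd 1 (ematInv p l m * toMat x * emat p l m) := fun x =>
    (Km_iff.1 (toMat_Hm x)).2.of_sub_one (r_lt_one hm).le
  let κ : Hgrp p hl hm ρ → Fin (2*l) → Fin (2*l) → ZMod (p ^ N) := fun x i j =>
    PadicInt.toZModPow N ⟨(ematInv p l m * toMat x * emat p l m) i j, hint x i j⟩
  have hmod : ∀ a b : ℤ_[p], PadicInt.toZModPow N a = PadicInt.toZModPow N b →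
      ‖(a : ℚ_[p]) - b‖ ≤ (p : ℝ) ^ (-(N : ℤ)) := fun a b hab => by
    have h1 : a - b ∈ RingHom.ker (PadicInt.toZModPow (p := p) N) := by
      rw [RingHom.mem_ker, map_sub, sub_eq_zero, hab]
    rwa [PadicInt.ker_toZModPow, ← PadicInt.norm_le_pow_iff_mem_span_pow] at h1
  have hκ : ∀ x y, κ x = κ y → x⁻¹ * y ∈ Lgrp p hl hm ρ := by
    intro x y hxy
    have hdiff : Bd ((p : ℝ) ^ (-(N : ℤ)))
        (ematInv p l m * toMat y * emat p l m - ematInv p l m * toMat x * emat p l m) := by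
      intro i j
      exact hmod _ _ (congrFun (congrFun hxy i) j).symm
    rw [mem_Lgrp]
    refine Km.of_congr (m := m) ((toMat_Hm _).so hl) ?_
    have hone : (ematInv p l m * toMat x⁻¹ * emat p l m) *
        (ematInv p l m * toMat x * emat p l m) = 1 := by
      rw [← ematInv_conj_mul, ← toMat_mul, inv_mul_cancel]
      have : toMat (1 : Hgrp p hl hm ρ) = 1 := rfl
      rw [this, mul_one, ematInv_mul_emat]
    rw [toMat_mul, ematInv_conj_mul, ← hone, ← mul_sub]
    have := (hint x⁻¹).mul hdiff zero_le_one (r_nonneg N)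
    rwa [one_mul] at this
  refine Finite.of_injective (fun q : Hgrp p hl hm ρ ⧸ Lgrp p hl hm ρ => κ q.out) fun q q' h => ?_
  have := hκ _ _ h
  rw [← QuotientGroup.eq, QuotientGroup.out_eq', QuotientGroup.out_eq'] at this
  exact this

/-- Summing a right `L`-invariant function over representatives of the cosets of `L` is insensitive
to left translation. -/
lemma sum_coset_translate {G : Type*} [Group G] {L : Subgroup G} [Fintype (G ⧸ L)] (f : G → ℂ)
    (hf : ∀ x, ∀ y ∈ L, f (x * y) = f x) (a : G) :
    ∑ q : G ⧸ L, f (a * q.out) = ∑ q : G ⧸ L, f q.out := by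
  have hrep : ∀ x y : G, (x : G ⧸ L) = y → f x = f y := fun x y h => by
    rw [QuotientGroup.eq] at h
    rw [← hf x _ h, mul_inv_cancel_left]
  refine Fintype.sum_equiv (MulAction.toPerm a) _ _ fun q => hrep _ _ ?_
  rw [QuotientGroup.out_eq']
  conv_rhs => rw [MulAction.toPerm_apply, ← QuotientGroup.out_eq' q]
  rfl

/-! ### Partial Bessel functions as finite averages -/

instance instSecondCountable : SecondCountableTopology (Matrix (Fin (2*l)) (Fin (2*l)) ℚ_[p]) :=
  inferInstanceAs (SecondCountableTopology (Fin (2*l) → Fin (2*l) → ℚ_[p]))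

/-- The closed set of matrices `u` with `a⁻¹ * u ≡ 1` modulo `p ^ m`. -/
def nbhd (m : ℕ) (a : Matrix (Fin (2*l)) (Fin (2*l)) ℚ_[p]) :
    Set (Matrix (Fin (2*l)) (Fin (2*l)) ℚ_[p]) :=
  {u | Bd ((p : ℝ) ^ (-(m : ℤ))) (a⁻¹ * u - 1)}

lemma isClosed_nbhd (a : Matrix (Fin (2*l)) (Fin (2*l)) ℚ_[p]) : IsClosed (nbhd m a) := by
  have : nbhd m a = ⋂ i, ⋂ j, {u | ‖(a⁻¹ * u - 1) i j‖ ≤ (p : ℝ) ^ (-(m : ℤ))} := by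
    ext u; simp [nbhd, Bd]
  rw [this]
  refine isClosed_iInter fun i => isClosed_iInter fun j => isClosed_le ?_ continuous_const
  exact (((continuous_const.matrix_mul continuous_id).sub continuous_const).matrix_elem i j).norm

variable [MeasurableSpace (Matrix (Fin (2*l)) (Fin (2*l)) ℚ_[p])]
    [BorelSpace (Matrix (Fin (2*l)) (Fin (2*l)) ℚ_[p])]
    {μ : Measure (Matrix (Fin (2*l)) (Fin (2*l)) ℚ_[p])}

/-- All cosets of `H_m ∩ K_m` in `H_m` have the same mass: each one meets `U_m`, and `μ` is
invariant under left translation by `U_m`. -/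
lemma measure_nbhd (hl : 1 ≤ l) (hm : 1 ≤ m)
    (hμl : ∀ u₀, Um p l m ρ u₀ → Measure.map (fun u => u₀ * u) μ = μ)
    {h : Matrix (Fin (2*l)) (Fin (2*l)) ℚ_[p]} (hh : Hm p l m ρ h) :
    μ (nbhd m h) = μ (nbhd m 1) := by
  obtain ⟨u, b, hu, -, hb, rfl⟩ := hh.factor hl hm
  have hud := hu.1.1.isUnit
  have hb' := (Km_iff.1 hb).2
  have hbd := (Km_iff.1 hb).1.isUnit
  have r0 := r_nonneg (p := p) m
  have r1 := r_lt_one (p := p) hm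
  have h1 : nbhd m (u * b) = nbhd m u := by
    ext v
    simp only [nbhd, Set.mem_ofPred_eq, Matrix.mul_inv_rev]
    constructor <;> intro h
    · have := hb'.mul_sub_one h r0 r1.le
      rwa [← Matrix.mul_assoc, ← Matrix.mul_assoc, Matrix.mul_nonsing_inv _ hbd, one_mul] at this
    · rw [Matrix.mul_assoc]
      exact (hb'.inv_sub_one r0 r1).mul_sub_one h r0 r1.le
  rw [h1, ← hμl u hu, Measure.map_apply (measurable_const_mul u) (isClosed_nbhd u).measurableSet,
    hμl u hu]
  congr 1
  ext v
  simp only [nbhd, Set.mem_ofPred_eq, Set.mem_preimage]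
  rw [Matrix.nonsing_inv_mul_cancel_left _ _ hud, inv_one, one_mul]

/-- The integral of a right `H_m ∩ K_m`-invariant function over `U_m` is a multiple of its sum over
the cosets `H_m / (H_m ∩ K_m)`. -/
lemma integral_eq_sum [IsFiniteMeasure μ] [Fintype (Hgrp p hl hm ρ ⧸ Lgrp p hl hm ρ)]
    (hμU : μ {u | ¬ Um p l m ρ u} = 0)
    (hμl : ∀ u₀, Um p l m ρ u₀ → Measure.map (fun u => u₀ * u) μ = μ)
    (f : Matrix (Fin (2*l)) (Fin (2*l)) ℚ_[p] → ℂ)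
    (hf : ∀ x y : Hgrp p hl hm ρ, y ∈ Lgrp p hl hm ρ → f (toMat (x * y)) = f (toMat x)) :
    ∫ u, f u ∂μ =
      μ.real (nbhd m 1) • ∑ q : Hgrp p hl hm ρ ⧸ Lgrp p hl hm ρ, f (toMat q.out) := by
  have hae : ∀ᵐ u ∂μ, f u = ∑ q : Hgrp p hl hm ρ ⧸ Lgrp p hl hm ρ,
      (nbhd m (toMat q.out)).indicator (fun _ => f (toMat q.out)) u := by
    filter_upwards [ae_iff.2 hμU] with u hu
    obtain ⟨x, rfl⟩ := exists_toMat (hl := hl) (hm := hm) hu.2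
    have hmem : ∀ y : Hgrp p hl hm ρ, toMat x ∈ nbhd m (toMat y) ↔
        (y : Hgrp p hl hm ρ ⧸ Lgrp p hl hm ρ) = x := fun y => by
      rw [QuotientGroup.eq, mem_Lgrp, Km_iff, toMat_mul, toMat_inv]
      exact ⟨fun h => ⟨((toMat_Hm y).so hl).inv.mul hu.1.1, h⟩, fun h => h.2⟩
    rw [Finset.sum_eq_single (x : Hgrp p hl hm ρ ⧸ Lgrp p hl hm ρ)]
    · rw [Set.indicator_of_mem ((hmem _).2 (QuotientGroup.out_eq' _))]
      have h1 := hf x (x⁻¹ * (x : Hgrp p hl hm ρ ⧸ Lgrp p hl hm ρ).out) (by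
        rw [← QuotientGroup.eq, QuotientGroup.out_eq'])
      rw [mul_inv_cancel_left] at h1
      exact h1.symm
    · intro q _ hq
      refine Set.indicator_of_notMem (fun h => hq ?_) _
      rw [← (hmem _).1 h, QuotientGroup.out_eq']
    · simp
  have hmeas : ∀ y : Hgrp p hl hm ρ, MeasurableSet (nbhd m (toMat y)) := fun y =>
    (isClosed_nbhd _).measurableSet
  rw [integral_congr_ae hae, integral_finsetSum _ fun q _ =>
    (integrable_const _).indicator (hmeas q.out), Finset.smul_sum]
  refine Finset.sum_congr rfl fun q _ => ?_
  rw [integral_indicator_const _ (hmeas q.out), measureReal_def, measureReal_def,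
    measure_nbhd hl hm hμl (toMat_Hm q.out)]

/-- If `W` is left `(U, ψ)`-equivariant and right `K_m`-invariant, then the partial Bessel function
`W_m` transforms by `ψ` under `U` on the left and by `ψ_m` under `H_m` on the right. The second
property holds because `W_m` is a multiple of a sum over the cosets `H_m / (H_m ∩ K_m)`, which left
translation by an element of `H_m` permutes. -/
lemma WmInt_equivariant (hp : p ≠ 2) (hl : 2 ≤ l) (hm : 1 ≤ m) [IsFiniteMeasure μ]
    {ψ₀ : AddChar ℚ_[p] ℂˣ} (hψ1 : ∀ x : ℚ_[p], ‖x‖ ≤ 1 → ψ₀ x = 1)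
    (hμU : μ {u | ¬ Um p l m ρ u} = 0)
    (hμl : ∀ u₀, Um p l m ρ u₀ → Measure.map (fun u => u₀ * u) μ = μ)
    {W : Matrix (Fin (2*l)) (Fin (2*l)) ℚ_[p] → ℂ}
    (hWU : ∀ u g : Matrix (Fin (2*l)) (Fin (2*l)) ℚ_[p], USO2l l ρ u → SO2l l ρ g →
      W (u * g) = (ψ₀ (lamU l u) : ℂ) * W g)
    (hWK : ∀ g k : Matrix (Fin (2*l)) (Fin (2*l)) ℚ_[p], SO2l l ρ g → Km p l m ρ k →
      W (g * k) = W g)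
    {u g h : Matrix (Fin (2*l)) (Fin (2*l)) ℚ_[p]} (hu : USO2l l ρ u) (hg : SO2l l ρ g)
    (hh : Hm p l m ρ h) :
    WmInt p l m ψ₀ μ W (u * g * h) =
      (ψ₀ (lamU l u) : ℂ) * (psim p l m ψ₀ h : ℂ) * WmInt p l m ψ₀ μ W g := by
  have hl1 : 1 ≤ l := by omega
  have hhS := hh.so hl1
  let _ := Fintype.ofFinite (Hgrp p hl1 hm ρ ⧸ Lgrp p hl1 hm ρ)
  have hinv : ∀ g, SO2l l ρ g → ∀ x y : Hgrp p hl1 hm ρ, y ∈ Lgrp p hl1 hm ρ →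
      ((psim p l m ψ₀ (toMat (x * y)) : ℂ))⁻¹ * W (g * toMat (x * y)) =
        ((psim p l m ψ₀ (toMat x) : ℂ))⁻¹ * W (g * toMat x) := fun g hg x y hy => by
    rw [toMat_mul, psim_mul hp hl hψ1 (toMat_Hm x) (toMat_Hm y),
      psim_eq_one_of_Km hp hl hm hψ1 ((mem_Lgrp y).1 hy), mul_one, ← Matrix.mul_assoc,
      hWK _ _ (hg.mul ((toMat_Hm x).so hl1)) ((mem_Lgrp y).1 hy)]
  have hleft : WmInt p l m ψ₀ μ W (u * g * h) =
      (ψ₀ (lamU l u) : ℂ) * WmInt p l m ψ₀ μ W (g * h) := by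
    unfold WmInt
    rw [← integral_const_mul]
    refine integral_congr_ae ?_
    filter_upwards [ae_iff.2 hμU] with v hv
    rw [Matrix.mul_assoc, Matrix.mul_assoc, hWU _ _ hu (hg.mul (hhS.mul hv.1.1)), Matrix.mul_assoc]
    ring
  rw [hleft, mul_assoc]
  congr 1
  unfold WmInt
  rw [integral_eq_sum (hl := hl1) (hm := hm) hμU hμl _ (hinv _ (hg.mul hhS)),
    integral_eq_sum (hl := hl1) (hm := hm) hμU hμl _ (hinv _ hg), mul_smul_comm]
  congr 1
  obtain ⟨a, rfl⟩ := exists_toMat (hl := hl1) (hm := hm) hh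
  rw [← sum_coset_translate (fun x : Hgrp p hl1 hm ρ =>
    ((psim p l m ψ₀ (toMat x) : ℂ))⁻¹ * W (g * toMat x)) (hinv g hg) a, Finset.mul_sum]
  refine Finset.sum_congr rfl fun q _ => ?_
  have hne : ((psim p l m ψ₀ (toMat a) : ℂˣ) : ℂ) ≠ 0 := Units.ne_zero _
  rw [toMat_mul, psim_mul hp hl hψ1 (toMat_Hm a) (toMat_Hm q.out), Units.val_mul, mul_inv,
    Matrix.mul_assoc, mul_assoc, mul_inv_cancel_left₀ hne]

end Cosets

/-! ### Uniqueness of the invariant measure -/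

/-- A left-invariant and a right-invariant probability measure on the same set are equal: both
coincide with their convolution. -/
lemma measure_eq_of_invariant {G : Type*} [Mul G] [MeasurableSpace G] [MeasurableMul₂ G]
    {μ ν : Measure G} [IsProbabilityMeasure μ] [IsProbabilityMeasure ν]
    (hr : ∀ᵐ y ∂ν, Measure.map (fun x => x * y) μ = μ)
    (hl : ∀ᵐ x ∂μ, Measure.map (fun y => x * y) ν = ν) : μ = ν := by
  ext A hA
  have hA' : MeasurableSet ((fun z : G × G => z.1 * z.2) ⁻¹' A) := measurable_mul hA
  have h1 : (μ.prod ν) ((fun z : G × G => z.1 * z.2) ⁻¹' A) = ν A := by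
    rw [Measure.prod_apply hA']
    have : ∀ᵐ x ∂μ, ν (Prod.mk x ⁻¹' ((fun z : G × G => z.1 * z.2) ⁻¹' A)) = ν A := by
      filter_upwards [hl] with x hx
      conv_rhs => rw [← hx, Measure.map_apply (measurable_const_mul x) hA]
      rfl
    rw [lintegral_congr_ae this, lintegral_const, measure_univ, mul_one]
  have h2 : (μ.prod ν) ((fun z : G × G => z.1 * z.2) ⁻¹' A) = μ A := by
    rw [Measure.prod_apply_symm hA']
    have : ∀ᵐ y ∂ν, μ ((fun x => (x, y)) ⁻¹' ((fun z : G × G => z.1 * z.2) ⁻¹' A)) = μ A := by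
      filter_upwards [hr] with y hy
      conv_rhs => rw [← hy, Measure.map_apply (measurable_mul_const y) hA]
      rfl
    rw [lintegral_congr_ae this, lintegral_const, measure_univ, mul_one]
  rw [← h1, h2]

lemma continuous_phi {p : ℕ} [Fact p.Prime] {l : ℕ} :
    Continuous (phi : Matrix (Fin (2*l)) (Fin (2*l)) ℚ_[p] → _) :=
  (continuous_const.matrix_mul continuous_id).matrix_mul continuous_const

/-- The Haar measure of `U_m` is stable under conjugation by `c t̃⁻¹`, by uniqueness. -/
lemma map_phi {p : ℕ} [Fact p.Prime] {l m : ℕ} {ρ : ℚ_[p]}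
    [MeasurableSpace (Matrix (Fin (2*l)) (Fin (2*l)) ℚ_[p])]
    [BorelSpace (Matrix (Fin (2*l)) (Fin (2*l)) ℚ_[p])]
    {μ : Measure (Matrix (Fin (2*l)) (Fin (2*l)) ℚ_[p])} [IsProbabilityMeasure μ]
    (hμU : μ {u | ¬ Um p l m ρ u} = 0)
    (hμr : ∀ u₀, Um p l m ρ u₀ → Measure.map (fun u => u * u₀) μ = μ)
    (hμl : ∀ u₀, Um p l m ρ u₀ → Measure.map (fun u => u₀ * u) μ = μ) :
    Measure.map phi μ = μ := by
  have hφ : Measurable (phi : Matrix (Fin (2*l)) (Fin (2*l)) ℚ_[p] → _) :=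
    continuous_phi.measurable
  have hae : ∀ᵐ u ∂μ, Um p l m ρ u := ae_iff.2 hμU
  have := Measure.isProbabilityMeasure_map (μ := μ) hφ.aemeasurable
  symm
  refine measure_eq_of_invariant ?_ ?_
  · have hemb : MeasurableEmbedding (phi : Matrix (Fin (2*l)) (Fin (2*l)) ℚ_[p] → _) :=
      (MeasurableEquiv.mk ⟨phi, phi, phi_phi, phi_phi⟩ hφ hφ).measurableEmbedding
    rw [hemb.ae_map_iff]
    filter_upwards [hae] with y hy
    exact hμr _ hy.phi
  · filter_upwards [hae] with x hx
    have hc : (fun y => x * y) ∘ phi = phi ∘ fun y => phi x * y := by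
      funext y
      simp only [Function.comp_apply, phi_mul, phi_phi]
    rw [Measure.map_map (measurable_const_mul x) hφ, hc,
      ← Measure.map_map hφ (measurable_const_mul _), hμl _ hx.phi]

/-- Lemma 4.4, conjugates of partial Bessel functions. -/
theorem statement11 (p : ℕ) [Fact p.Prime] (hp : p ≠ 2) (l : ℕ) (hl : 2 ≤ l)
    [MeasurableSpace (Matrix (Fin (2*l)) (Fin (2*l)) ℚ_[p])]
    [BorelSpace (Matrix (Fin (2*l)) (Fin (2*l)) ℚ_[p])]
    (ρ : ℚ_[p]) (hρ1 : ‖ρ‖ = 1) (hρ : ∀ x : ℚ_[p], x * x ≠ ρ)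
    (ψ₀ : AddChar ℚ_[p] ℂˣ)
    (hψ1 : ∀ x : ℚ_[p], ‖x‖ ≤ 1 → ψ₀ x = 1)
    (hψ2 : ∃ x : ℚ_[p], ‖x‖ ≤ (p : ℝ) ∧ ψ₀ x ≠ 1)
    (W : Matrix (Fin (2*l)) (Fin (2*l)) ℚ_[p] → ℂ)
    (hWU : ∀ u g : Matrix (Fin (2*l)) (Fin (2*l)) ℚ_[p], USO2l l ρ u → SO2l l ρ g →
      W (u * g) = (ψ₀ (lamU l u) : ℂ) * W g)
    (hW1 : W 1 = 1)
    (C : ℕ) (hC : 1 ≤ C)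
    (hWC : ∀ g k : Matrix (Fin (2*l)) (Fin (2*l)) ℚ_[p], SO2l l ρ g → Km p l C ρ k →
      W (g * k) = W g)
    (m : ℕ) (hm : 1 ≤ m)
    (μ : Measure (Matrix (Fin (2*l)) (Fin (2*l)) ℚ_[p])) [IsProbabilityMeasure μ]
    (hμU : μ {u | ¬ Um p l m ρ u} = 0)
    (hμr : ∀ u₀, Um p l m ρ u₀ → Measure.map (fun u => u * u₀) μ = μ)
    (hμl : ∀ u₀, Um p l m ρ u₀ → Measure.map (fun u => u₀ * u) μ = μ) :
    -- (1) `W^c(I) = 1` and `W^c` is `(U_{SO_{2l}}, ψ)`-equivariant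
    (conjW p l W 1 = 1 ∧
      ∀ u g : Matrix (Fin (2*l)) (Fin (2*l)) ℚ_[p], USO2l l ρ u → SO2l l ρ g →
        conjW p l W (u * g) = (ψ₀ (lamU l u) : ℂ) * conjW p l W g) ∧
    -- (2) `(W^c)_m = (W_m)^c`
    (WmInt p l m ψ₀ μ (conjW p l W) = conjW p l (WmInt p l m ψ₀ μ W)) ∧
    -- (3) for every `m' ≥ 1`, `W` is right `K_{m'}`-invariant iff `W^c` is
    (∀ m' : ℕ, 1 ≤ m' →
      ((∀ g k : Matrix (Fin (2*l)) (Fin (2*l)) ℚ_[p], SO2l l ρ g → Km p l m' ρ k →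
          W (g * k) = W g) ↔
        (∀ g k : Matrix (Fin (2*l)) (Fin (2*l)) ℚ_[p], SO2l l ρ g → Km p l m' ρ k →
          conjW p l W (g * k) = conjW p l W g))) ∧
    -- (4) for `m ≥ C`, `(W^c)_m(u·g·h) = ψ(u)·ψ_m(h)·(W^c)_m(g)`
    (C ≤ m → ∀ u g h : Matrix (Fin (2*l)) (Fin (2*l)) ℚ_[p],
      USO2l l ρ u → SO2l l ρ g → Hm p l m ρ h →
      WmInt p l m ψ₀ μ (conjW p l W) (u * g * h) =
        (ψ₀ (lamU l u) : ℂ) * (psim p l m ψ₀ h : ℂ) *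
          WmInt p l m ψ₀ μ (conjW p l W) g) := by

  have hl1 : 1 ≤ l := by omega
  have hc : ∀ W g, conjW p l W g = W (phi g) := conjW_eq hl1
  have hcU : ∀ u g : Matrix (Fin (2*l)) (Fin (2*l)) ℚ_[p], USO2l l ρ u → SO2l l ρ g →
      conjW p l W (u * g) = (ψ₀ (lamU l u) : ℂ) * conjW p l W g := fun u g hu hg => by
    rw [hc, hc, phi_mul, hWU _ _ hu.phi hg.phi, lamU_phi hl]
  have hcK : ∀ (m' : ℕ) (V : Matrix (Fin (2*l)) (Fin (2*l)) ℚ_[p] → ℂ),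
      (∀ g k, SO2l l ρ g → Km p l m' ρ k → V (g * k) = V g) →
      ∀ g k, SO2l l ρ g → Km p l m' ρ k → conjW p l V (g * k) = conjW p l V g :=
    fun m' V hV g k hg hk => by
      rw [hc, hc, phi_mul, hV _ _ hg.phi hk.phi]
  have hcc : conjW p l (conjW p l W) = W := by
    funext g
    rw [hc, hc, phi_phi]
  refine ⟨⟨by rw [hc, phi_one, hW1], hcU⟩, ?_, fun m' _ => ⟨hcK m' W, fun h => ?_⟩, ?_⟩
  · funext g
    have hφ : Measurable (phi : Matrix (Fin (2*l)) (Fin (2*l)) ℚ_[p] → _) :=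
      continuous_phi.measurable
    have hemb : MeasurableEmbedding (phi : Matrix (Fin (2*l)) (Fin (2*l)) ℚ_[p] → _) :=
      (MeasurableEquiv.mk ⟨phi, phi, phi_phi, phi_phi⟩ hφ hφ).measurableEmbedding
    rw [hc]
    unfold WmInt
    conv_rhs => rw [← map_phi hμU hμr hμl, hemb.integral_map]
    refine integral_congr_ae (Filter.Eventually.of_forall fun u => ?_)
    simp only [hc, phi_mul, psim_eq hl, lamU_phi hl]
  · have := hcK m' _ h
    rwa [hcc] at this
  · intro hCm u g h hu hg hh
    exact WmInt_equivariant hp hl hm hψ1 hμU hμl hcU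
      (fun g k hg hk => hcK C W hWC g k hg (hk.mono hCm)) hu hg hh
end
end

section
/- The map w ↦ θ_w, restricted to the Bessel support B(W), is a bijection from B(W) onto the power set of Δ. Moreover, for w ∈ B(W) one has θ_w = {α ∈ Δ : w(α) ∈ Δ}. -/
/-! The proof is by the height functional `ht v = ∑ k, (n - k) v_k` with `n = l - 1`, which is `1` on
every simple root and positive on every positive root. With the convention `e_n = 0` (which
`evec` satisfies) every simple root is `e_i - e_{i+1}`. A signed permutation `w = (σ, ε)` is
recorded by the integers `p i = ht (w e_i) = ε_i (n - σ i)`, `p n = 0`. If `w` lies in the Bessel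
support, then for each `i < n` either `p i = p (i+1) + 1` (when `α_i ∈ θ_w`) or `p i < p (i+1)`
(when `α_i ∉ θ_w`), and `|p|` is injective. Since `ht` separates `Φ⁺` from
`Φ⁻`, the last claim is immediate.

Injectivity: let `T` be the set of indices of `θ_w`. It cuts `{0, …, n}` into blocks along which
`p` decreases by one. On the block ending in `n` one has `p i = n - i ≥ 0`; everywhere else `p` is
negative and larger in absolute value (`Sys.neg`), and since different blocks occupy disjoint
intervals of values, the ascents between consecutive blocks order the blocks completely
(`Sys.asc`). So `T` determines all signs `ε_i` and the relative order of the values `σ i`, hence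
`σ`, the only order automorphism of `Fin n` being the identity.

Surjectivity: given `T`, let `w` fix `e_i` on the final block, and send `e_i` to `-e_{a+b-i}` on
any other block `[a, b]`. This is `w_0` times the longest element of the Levi subgroup generated
by the reflections in `T`. -/

open Matrix BigOperators

noncomputable section

/-- The standard basis vector `e_k` of `ℝ^{l-1}` (0-indexed; `0` if out of range). -/
def evec (l k : ℕ) : Fin (l-1) → ℝ := fun j => if (j : ℕ) = k then 1 else 0

/-- The simple roots of type `B_{l-1}` (0-indexed): `α_i = e_i − e_{i+1}` for `i < l-2`, and
`α_{l-2} = e_{l-2}` (in the paper's 1-indexed notation, `α_i = e_i − e_{i+1}` for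
`1 ≤ i ≤ l-2` and `α_{l-1} = e_{l-1}`). -/
def alphaR (l i : ℕ) : Fin (l-1) → ℝ :=
  if i = l - 2 then evec l i else evec l i - evec l (i+1)

/-- The positive roots `Φ⁺ = {e_i − e_j : i < j} ∪ {e_i + e_j : i ≠ j} ∪ {e_i}`. -/
def PhiPlus (l : ℕ) : Set (Fin (l-1) → ℝ) :=
  {v | ∃ i j : ℕ, i < j ∧ j < l - 1 ∧ v = evec l i - evec l j} ∪
  {v | ∃ i j : ℕ, i < j ∧ j < l - 1 ∧ v = evec l i + evec l j} ∪
  {v | ∃ i : ℕ, i < l - 1 ∧ v = evec l i}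

/-- The set of simple roots `Δ`. -/
def DeltaR (l : ℕ) : Set (Fin (l-1) → ℝ) := {v | ∃ i : ℕ, i < l - 1 ∧ v = alphaR l i}

/-- A signed permutation: `w(e_i) = ε_i·e_{σ(i)}` with `ε_i ∈ {±1}`.  (The linear
automorphisms of `ℝ^{l-1}` are represented by matrices acting via `mulVec`.) -/
def IsSignedPerm (l : ℕ) (w : Matrix (Fin (l-1)) (Fin (l-1)) ℝ) : Prop :=
  ∃ (σ : Equiv.Perm (Fin (l-1))) (ε : Fin (l-1) → ℝ),
    (∀ i, ε i = 1 ∨ ε i = -1) ∧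
    ∀ i : Fin (l-1), w.mulVec (evec l (i : ℕ)) = ε i • evec l ((σ i : Fin (l-1)) : ℕ)

/-- The Bessel support `B(W) = {w ∈ W : ∀ α ∈ Δ, w(α) ∈ Δ or w(α) ∈ Φ⁻}`. -/
def BesselSupp (l : ℕ) : Set (Matrix (Fin (l-1)) (Fin (l-1)) ℝ) :=
  {w | IsSignedPerm l w ∧
    ∀ a ∈ DeltaR l, w.mulVec a ∈ DeltaR l ∨ (-(w.mulVec a)) ∈ PhiPlus l}

/-- `θ_w = {α ∈ Δ : w(α) ∈ Φ⁺}`. -/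
def thetaSet (l : ℕ) (w : Matrix (Fin (l-1)) (Fin (l-1)) ℝ) : Set (Fin (l-1) → ℝ) :=
  {a | a ∈ DeltaR l ∧ w.mulVec a ∈ PhiPlus l}

/-! ### Roots and heights -/

/-- The height functional `v ↦ ∑ k, (l - 1 - k) v_k`; it takes the value `1` on simple roots. -/
def ht (l : ℕ) (v : Fin (l-1) → ℝ) : ℝ := (fun k : Fin (l-1) => ((l-1 : ℕ) : ℝ) - (k : ℕ)) ⬝ᵥ v

lemma ht_sub (l : ℕ) (v w : Fin (l-1) → ℝ) : ht l (v - w) = ht l v - ht l w :=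
  dotProduct_sub _ _ _

lemma ht_add (l : ℕ) (v w : Fin (l-1) → ℝ) : ht l (v + w) = ht l v + ht l w :=
  dotProduct_add _ _ _

lemma ht_neg (l : ℕ) (v : Fin (l-1) → ℝ) : ht l (-v) = -ht l v :=
  dotProduct_neg _ _

lemma ht_smul (l : ℕ) (c : ℝ) (v : Fin (l-1) → ℝ) : ht l (c • v) = c * ht l v := by
  simp [ht, dotProduct_smul]

lemma evec_fin (l : ℕ) (i : Fin (l-1)) : evec l (i : ℕ) = Pi.single i 1 := by
  ext j
  simp [evec, Pi.single_apply, Fin.ext_iff]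

lemma evec_top (l k : ℕ) (hk : l - 1 ≤ k) : evec l k = 0 := by
  ext j
  have := j.2
  simp only [evec, Pi.zero_apply, ite_eq_right_iff]
  omega

lemma ht_evec (l k : ℕ) (hk : k ≤ l - 1) : ht l (evec l k) = ((l-1 : ℕ) : ℝ) - k := by
  rcases hk.lt_or_eq with h | h
  · have := evec_fin l ⟨k, h⟩
    simp only at this
    rw [this, ht, dotProduct_single_one]
  · subst h
    rw [evec_top l _ le_rfl]
    simp [ht]

/-- With `e_{l-1} = 0`, the last simple root has the same shape as the others. -/
lemma alphaR_eq (l i : ℕ) : alphaR l i = evec l i - evec l (i+1) := by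
  unfold alphaR
  split_ifs with h
  · rw [evec_top l (i+1) (by omega), sub_zero]
  · rfl

lemma evec_sub_mem (l i j : ℕ) (hij : i < j) (hj : j ≤ l - 1) :
    evec l i - evec l j ∈ PhiPlus l := by
  rcases hj.lt_or_eq with h | h
  · exact Or.inl (Or.inl ⟨i, j, hij, h, rfl⟩)
  · exact Or.inr ⟨i, by omega, by rw [evec_top l j h.ge, sub_zero]⟩

lemma evec_add_mem (l i j : ℕ) (hij : i < j) (hj : j ≤ l - 1) :
    evec l i + evec l j ∈ PhiPlus l := by
  rcases hj.lt_or_eq with h | h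
  · exact Or.inl (Or.inr ⟨i, j, hij, h, rfl⟩)
  · exact Or.inr ⟨i, by omega, by rw [evec_top l j h.ge, add_zero]⟩

lemma delta_sub (l : ℕ) : DeltaR l ⊆ PhiPlus l := by
  rintro _ ⟨i, hi, rfl⟩
  rw [alphaR_eq l i]
  exact evec_sub_mem l i (i+1) (by omega) (by omega)

lemma ht_delta (l : ℕ) (v : Fin (l-1) → ℝ) (hv : v ∈ DeltaR l) : ht l v = 1 := by
  obtain ⟨i, hi, rfl⟩ := hv
  rw [alphaR_eq l i, ht_sub, ht_evec l i (by omega), ht_evec l (i+1) (by omega)]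
  push_cast
  ring

lemma ht_pos (l : ℕ) (v : Fin (l-1) → ℝ) (hv : v ∈ PhiPlus l) : 0 < ht l v := by
  rcases hv with (⟨i, j, hij, hj, rfl⟩ | ⟨i, j, hij, hj, rfl⟩) | ⟨i, hi, rfl⟩
  · rw [ht_sub, ht_evec l i (by omega), ht_evec l j (by omega)]
    have : (i : ℝ) < j := by exact_mod_cast hij
    linarith
  · rw [ht_add, ht_evec l i (by omega), ht_evec l j (by omega)]
    have h1 : (i : ℝ) < (l-1 : ℕ) := by exact_mod_cast (hij.trans hj)
    have h2 : (j : ℝ) < (l-1 : ℕ) := by exact_mod_cast hj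
    linarith
  · rw [ht_evec l i (by omega)]
    have h1 : (i : ℝ) < (l-1 : ℕ) := by exact_mod_cast hi
    linarith

lemma not_pos_neg (l : ℕ) (v : Fin (l-1) → ℝ) (hv : v ∈ PhiPlus l) : -v ∉ PhiPlus l := by
  intro h
  have h1 := ht_pos l _ hv
  have h2 := ht_pos l _ h
  rw [ht_neg] at h2
  linarith

/-! ### Sequences of signed heights -/

/-- The combinatorial shadow of an element of the Bessel support: `p i` is the height of `w e_i`
and `T` is the set of indices of the simple roots in `θ_w`. -/
structure Sys (n : ℕ) (T : ℕ → Prop) (p : ℕ → ℤ) : Prop where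
  top : p n = 0
  inj : ∀ i ≤ n, ∀ j ≤ n, |p i| = |p j| → i = j
  desc : ∀ i < n, T i → p i = p (i+1) + 1
  asc' : ∀ i < n, ¬ T i → p i < p (i+1)

namespace Sys

variable {n : ℕ} {T : ℕ → Prop} {p : ℕ → ℤ}

lemma ne (h : Sys n T p) {i j : ℕ} (hi : i ≤ n) (hj : j ≤ n) (hij : i ≠ j) :
    p i ≠ p j ∧ p i ≠ - p j := by
  refine ⟨fun e => hij (h.inj i hi j hj (by rw [e])), fun e => hij (h.inj i hi j hj ?_)⟩
  rw [e, abs_neg]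

lemma run (h : Sys n T p) (i d : ℕ) (hd : i + d ≤ n) (hT : ∀ k, i ≤ k → k < i + d → T k) :
    p i = p (i + d) + d := by
  induction d with
  | zero => simp
  | succ d ih =>
    have h1 := ih (by omega) (fun k h1 h2 => hT k h1 (by omega))
    have h2 := h.desc (i+d) (by omega) (hT _ (by omega) (by omega))
    rw [← add_assoc]
    push_cast
    omega

lemma fin (h : Sys n T p) (i : ℕ) (hi : i ≤ n) (hT : ∀ k, i ≤ k → k < n → T k) :
    p i = n - i := by
  obtain ⟨d, rfl⟩ := Nat.exists_eq_add_of_le hi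
  have := h.run i d le_rfl hT
  rw [h.top] at this
  push_cast
  omega

/-- Outside the final block, `p` is negative, and larger in absolute value than anywhere on the
final block. -/
lemma neg (h : Sys n T p) (d i : ℕ) (hi : i + d = n) (hT : ¬ ∀ k, i ≤ k → k < n → T k)
    (j : ℕ) (hj : j ≤ n) (hjT : ∀ k, j ≤ k → k < n → T k) : p i < - p j := by
  induction d generalizing i with
  | zero => exact absurd (fun k h1 h2 => by omega) hT
  | succ d ih =>
    have hij : i < j := by
      by_contra hc
      exact hT fun k h1 h2 => hjT k (by omega) h2
    by_cases hF : ∀ k, i + 1 ≤ k → k < n → T k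
    · have hTi : ¬ T i := fun hc => hT fun k h1 h2 => by
        rcases h1.lt_or_eq with h3 | h3
        · exact hF k h3 h2
        · exact h3 ▸ hc
      have h1 := h.asc' i (by omega) hTi
      have h2 := h.fin (i+1) (by omega) hF
      have h3 := h.fin j hj hjT
      by_contra hc
      -- integers of absolute value at most `p (i+1)` are, up to sign, values on the final block
      have key : ∃ m : ℕ, i < m ∧ m ≤ n ∧ |p i| = n - m := by
        refine ⟨n - (p i).natAbs, ?_, ?_, ?_⟩
        · omega
        · omega
        · rcases abs_cases (p i) with h5 | h5 <;> omega
      obtain ⟨m, hm1, hm2, hm3⟩ := key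
      have h4 := h.fin m hm2 (fun k h1 h2 => hF k (by omega) h2)
      have := h.inj i (by omega) m hm2 (by rw [hm3, h4, abs_of_nonneg (by omega)])
      omega
    · have h1 := ih (i+1) (by omega) hF
      have h2 := (h.ne (i := i) (j := j) (by omega) hj hij.ne).2
      by_cases hTi : T i
      · have := h.desc i (by omega) hTi
        omega
      · have := h.asc' i (by omega) hTi
        omega

/-- Indices in different blocks are ordered by `p` in the same way as the blocks. -/
lemma asc (h : Sys n T p) (i j : ℕ) (hij : i < j) (hj : j ≤ n)
    (hT : ¬ ∀ k, i ≤ k → k < j → T k) : p i < p j := by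
  induction j with
  | zero => omega
  | succ j ih =>
    have hne := (h.ne (i := i) (j := j+1) (by omega) hj hij.ne).1
    by_cases hr : ∀ k, i ≤ k → k < j → T k
    · have hTj : ¬ T j := fun hc => hT fun k h1 h2 => by
        rcases (Nat.lt_succ_iff.1 h2).lt_or_eq with h3 | h3
        · exact hr k h1 h3
        · exact h3 ▸ hc
      have h1 := h.asc' j (by omega) hTj
      by_contra hc
      -- the values of `p` on `[i, j]` fill the interval from `p j` to `p i`, so `p (j+1)` repeats one
      obtain ⟨t, ht⟩ := Int.eq_ofNat_of_zero_le (a := p (j+1) - p j) (by omega)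
      have h2 := h.run i (j - i) (by omega) (fun k h1 h2 => hr k h1 (by omega))
      rw [show i + (j - i) = j by omega] at h2
      have h3 := h.run (j - t) t (by omega) (fun k h1 h2 => hr k (by omega) (by omega))
      rw [show j - t + t = j by omega] at h3
      exact (h.ne (i := j - t) (j := j+1) (by omega) hj (by omega)).1 (by omega)
    · have hlt : i < j := by
        by_contra hc
        exact hr fun k h1 h2 => by omega
      have h1 := ih hlt (by omega) hr
      by_cases hTj : T j
      · have := h.desc j (by omega) hTj
        omega
      · have := h.asc' j (by omega) hTj
        omega

lemma pos_iff (h : Sys n T p) (i : ℕ) (hi : i < n) :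
    0 < p i ↔ ∀ k, i ≤ k → k < n → T k := by
  constructor
  · intro hp
    by_contra hc
    have := h.neg (n - i) i (by omega) hc n le_rfl (fun k h1 h2 => by omega)
    rw [h.top] at this
    omega
  · intro hT
    have := h.fin i hi.le hT
    omega

lemma abs_lt_iff (h : Sys n T p) (i j : ℕ) (hij : i < j) (hj : j < n) :
    |p j| < |p i| ↔ ((∀ k, j ≤ k → k < n → T k) ∨ ¬ ∀ k, i ≤ k → k < j → T k) := by
  have aj := abs_cases (p j)
  have ai := abs_cases (p i)
  have hpj := h.pos_iff j hj
  have hpi := h.pos_iff i (by omega)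
  by_cases hFj : ∀ k, j ≤ k → k < n → T k
  · refine iff_of_true ?_ (Or.inl hFj)
    have h1 := h.fin j hj.le hFj
    by_cases hFi : ∀ k, i ≤ k → k < n → T k
    · have h2 := h.fin i (by omega) hFi
      omega
    · have h2 := h.neg (n - i) i (by omega) hFi j hj.le hFj
      omega
  · have hFi : ¬ ∀ k, i ≤ k → k < n → T k := fun hc => hFj fun k h1 h2 => hc k (by omega) h2
    have h1 : ¬ 0 < p j := fun hc => hFj (hpj.1 hc)
    have h2 : ¬ 0 < p i := fun hc => hFi (hpi.1 hc)
    rw [or_iff_right hFj]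
    by_cases hr : ∀ k, i ≤ k → k < j → T k
    · have h3 := h.run i (j - i) (by omega) (fun k h1 h2 => hr k h1 (by omega))
      rw [show i + (j - i) = j by omega] at h3
      refine iff_of_false ?_ (not_not.2 hr)
      omega
    · have h3 := h.asc i j hij hj.le hr
      refine iff_of_true ?_ hr
      omega

/-- The index set `T` determines the order of the absolute values of `p`. -/
lemma abs_lt_congr {q : ℕ → ℤ} (h : Sys n T p) (h' : Sys n T q) (i j : ℕ) (hi : i < n)
    (hj : j < n) : |p j| < |p i| ↔ |q j| < |q i| := by
  rcases lt_trichotomy i j with hij | hij | hij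
  · rw [h.abs_lt_iff i j hij hj, h'.abs_lt_iff i j hij hj]
  · simp [hij]
  · have h1 := h.abs_lt_iff j i hij hi
    rw [← h'.abs_lt_iff j i hij hi] at h1
    have h2 : |p i| ≠ |p j| := fun e => hij.ne' (h.inj _ hi.le _ hj.le e)
    have h3 : |q i| ≠ |q j| := fun e => hij.ne' (h'.inj _ hi.le _ hj.le e)
    omega

end Sys

/-! ### Injectivity -/

/-- The signed height `ε_i (n - σ i)` of `w e_i`, as an integer, with the value `0` for `i ≥ n`. -/
def pfun (n : ℕ) (σ : Equiv.Perm (Fin n)) (ε : Fin n → ℝ) (i : ℕ) : ℤ :=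
  if h : i < n then
    (if ε ⟨i, h⟩ = 1 then (n : ℤ) - (σ ⟨i, h⟩ : ℕ) else -((n : ℤ) - (σ ⟨i, h⟩ : ℕ)))
  else 0

lemma abs_pfun (n : ℕ) (σ : Equiv.Perm (Fin n)) (ε : Fin n → ℝ) (i : Fin n) :
    |pfun n σ ε i| = n - (σ i : ℕ) := by
  have := (σ i).2
  simp only [pfun, i.2, dif_pos, Fin.eta]
  split_ifs
  · rw [abs_of_nonneg (by omega)]
  · rw [abs_neg, abs_of_nonneg (by omega)]

lemma pfun_pos (n : ℕ) (σ : Equiv.Perm (Fin n)) (ε : Fin n → ℝ) (i : Fin n) :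
    0 < pfun n σ ε i ↔ ε i = 1 := by
  have := (σ i).2
  simp only [pfun, i.2, dif_pos, Fin.eta]
  split_ifs with h <;> simp only [h, iff_true, iff_false] <;> omega

lemma pfun_ht (l : ℕ) (w : Matrix (Fin (l-1)) (Fin (l-1)) ℝ) (σ : Equiv.Perm (Fin (l-1)))
    (ε : Fin (l-1) → ℝ) (hε : ∀ i, ε i = 1 ∨ ε i = -1)
    (hw : ∀ i : Fin (l-1), w.mulVec (evec l (i : ℕ)) = ε i • evec l ((σ i : Fin (l-1)) : ℕ))
    (i : ℕ) : ht l (w.mulVec (evec l i)) = pfun (l-1) σ ε i := by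
  by_cases h : i < l - 1
  · have h1 := hw ⟨i, h⟩
    simp only at h1
    rw [h1, ht_smul, ht_evec l _ (σ ⟨i, h⟩).2.le]
    simp only [pfun, h, dif_pos]
    rcases hε ⟨i, h⟩ with h2 | h2
    · simp [h2]
    · rw [if_neg (by rw [h2]; norm_num), h2]
      push_cast
      ring
  · rw [evec_top l i (by omega)]
    simp [pfun, h, ht]

lemma sys_of_bessel (l : ℕ) (w : Matrix (Fin (l-1)) (Fin (l-1)) ℝ) (σ : Equiv.Perm (Fin (l-1)))
    (ε : Fin (l-1) → ℝ) (hε : ∀ i, ε i = 1 ∨ ε i = -1)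
    (hw : ∀ i : Fin (l-1), w.mulVec (evec l (i : ℕ)) = ε i • evec l ((σ i : Fin (l-1)) : ℕ))
    (hB : ∀ a ∈ DeltaR l, w.mulVec a ∈ DeltaR l ∨ (-(w.mulVec a)) ∈ PhiPlus l) :
    Sys (l-1) (fun i => alphaR l i ∈ thetaSet l w) (pfun (l-1) σ ε) := by
  have hα : ∀ i < l - 1, ht l (w.mulVec (alphaR l i)) =
      ((pfun (l-1) σ ε i - pfun (l-1) σ ε (i+1) : ℤ) : ℝ) := by
    intro i hi
    rw [alphaR_eq l i, Matrix.mulVec_sub, ht_sub, pfun_ht l w σ ε hε hw,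
      pfun_ht l w σ ε hε hw]
    push_cast
    rfl
  have htop : pfun (l-1) σ ε (l-1) = 0 := by simp [pfun]
  refine ⟨htop, ?_, ?_, ?_⟩
  · intro i hi j hj e
    rcases hi.lt_or_eq with hi | hi <;> rcases hj.lt_or_eq with hj | hj
    · have h1 := abs_pfun _ σ ε ⟨i, hi⟩
      have h2 := abs_pfun _ σ ε ⟨j, hj⟩
      simp only at h1 h2
      have : σ ⟨i, hi⟩ = σ ⟨j, hj⟩ := Fin.ext (by omega)
      simpa using σ.injective this
    · have h1 := abs_pfun _ σ ε ⟨i, hi⟩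
      have := (σ ⟨i, hi⟩).2
      rw [hj, htop] at e
      simp only at h1
      rw [abs_zero] at e
      omega
    · have h1 := abs_pfun _ σ ε ⟨j, hj⟩
      have := (σ ⟨j, hj⟩).2
      rw [hi, htop] at e
      simp only at h1
      rw [abs_zero] at e
      omega
    · omega
  · intro i hi hT
    have h1 : w.mulVec (alphaR l i) ∈ DeltaR l :=
      (hB _ ⟨i, hi, rfl⟩).resolve_right (not_pos_neg l _ hT.2)
    have h2 := ht_delta l _ h1
    rw [hα i hi] at h2
    have h3 : pfun (l-1) σ ε i - pfun (l-1) σ ε (i+1) = 1 := by exact_mod_cast h2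
    omega
  · intro i hi hT
    have h1 : -(w.mulVec (alphaR l i)) ∈ PhiPlus l :=
      (hB _ ⟨i, hi, rfl⟩).resolve_left fun h => hT ⟨⟨i, hi, rfl⟩, delta_sub l h⟩
    have h2 := ht_pos l _ h1
    rw [ht_neg, hα i hi] at h2
    have h3 : 0 < -(pfun (l-1) σ ε i - pfun (l-1) σ ε (i+1)) := by exact_mod_cast h2
    omega

lemma perm_eq_of_lt_iff {n : ℕ} (σ τ : Equiv.Perm (Fin n))
    (h : ∀ i j, σ i < σ j ↔ τ i < τ j) : σ = τ := by
  have hle : ∀ a b, τ (σ.symm a) ≤ τ (σ.symm b) ↔ a ≤ b := by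
    intro a b
    have := h (σ.symm b) (σ.symm a)
    simp only [Equiv.apply_symm_apply] at this
    rw [← not_lt, ← this, not_lt]
  let f : Fin n ≃o Fin n := ⟨σ.symm.trans τ, by intro a b; exact hle a b⟩
  have hf : f = OrderIso.refl _ := Subsingleton.elim _ _
  ext i
  have h1 : f (σ i) = σ i := by rw [hf]; rfl
  have h2 : f (σ i) = τ i := congrArg τ (σ.symm_apply_apply i)
  rw [← h1, h2]

lemma theta_injective (l : ℕ) (w w' : Matrix (Fin (l-1)) (Fin (l-1)) ℝ) (hw : w ∈ BesselSupp l)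
    (hw' : w' ∈ BesselSupp l) (hθ : thetaSet l w = thetaSet l w') : w = w' := by
  obtain ⟨⟨σ, ε, hε, hσ⟩, hB⟩ := hw
  obtain ⟨⟨τ, δ, hδ, hτ⟩, hB'⟩ := hw'
  have hs := sys_of_bessel l w σ ε hε hσ hB
  have ht := sys_of_bessel l w' τ δ hδ hτ hB'
  rw [← hθ] at ht
  have e1 : σ = τ := by
    apply perm_eq_of_lt_iff
    intro i j
    have := hs.abs_lt_congr ht i j i.2 j.2
    rw [abs_pfun, abs_pfun, abs_pfun, abs_pfun] at this
    rw [Fin.lt_def, Fin.lt_def]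
    omega
  have e2 : ε = δ := by
    ext i
    have h1 : ε i = 1 ↔ δ i = 1 := by
      rw [← pfun_pos _ σ ε i, ← pfun_pos _ τ δ i, hs.pos_iff i i.2, ht.pos_iff i i.2]
    rcases hε i with h | h <;> rcases hδ i with h' | h' <;> rw [h, h'] at h1 ⊢ <;> norm_num at h1
  subst e1 e2
  apply Matrix.ext_of_mulVec_single
  intro i
  rw [← evec_fin, hσ, hτ]

/-! ### Surjectivity -/

open Classical in
/-- The first element of the block of `i`. -/
def bstart (T : ℕ → Prop) : ℕ → ℕ
  | 0 => 0
  | i+1 => if T i then bstart T i else i+1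

open Classical in
/-- The last element of the block of `i` in `{0, …, n}`, for `i ≤ n`: since `T n` fails in the
applications, this is the first `b ≥ i` at which `T` fails. The default value `i` is never used. -/
def bend (T : ℕ → Prop) (i : ℕ) : ℕ :=
  if h : ∃ b, i ≤ b ∧ ¬ T b then Nat.find h else i

lemma bstart_le (T : ℕ → Prop) (i : ℕ) : bstart T i ≤ i := by
  induction i with
  | zero => simp [bstart]
  | succ i ih =>
    rw [bstart]
    split_ifs <;> omega

lemma bstart_run (T : ℕ → Prop) (i k : ℕ) (h1 : bstart T i ≤ k) (h2 : k < i) : T k := by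
  induction i with
  | zero => omega
  | succ i ih =>
    rw [bstart] at h1
    split_ifs at h1 with h
    · rcases (Nat.lt_succ_iff.1 h2).lt_or_eq with h3 | h3
      · exact ih h1 h3
      · exact h3 ▸ h
    · omega

open Classical in
lemma bend_spec (T : ℕ → Prop) (n i : ℕ) (hn : ¬ T n) (hi : i ≤ n) :
    i ≤ bend T i ∧ bend T i ≤ n ∧ ¬ T (bend T i) ∧ ∀ k, i ≤ k → k < bend T i → T k := by
  have h : ∃ b, i ≤ b ∧ ¬ T b := ⟨n, hi, hn⟩
  simp only [bend, h, dif_pos]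
  refine ⟨(Nat.find_spec h).1, Nat.find_min' h ⟨hi, hn⟩, (Nat.find_spec h).2, ?_⟩
  intro k h1 h2
  have := Nat.find_min h h2
  tauto

lemma bstart_const (T : ℕ → Prop) (i d : ℕ) (hT : ∀ k, i ≤ k → k < i + d → T k) :
    bstart T (i + d) = bstart T i := by
  induction d with
  | zero => rfl
  | succ d ih =>
    rw [← add_assoc, bstart, if_pos (hT _ (by omega) (by omega))]
    exact ih fun k h1 h2 => hT k h1 (by omega)

lemma bend_const (T : ℕ → Prop) (n i d : ℕ) (hn : ¬ T n) (hi : i + d ≤ n)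
    (hT : ∀ k, i ≤ k → k < i + d → T k) : bend T (i + d) = bend T i := by
  obtain ⟨a1, a2, a3, a4⟩ := bend_spec T n i hn (by omega)
  obtain ⟨b1, b2, b3, b4⟩ := bend_spec T n (i+d) hn hi
  rcases lt_trichotomy (bend T (i+d)) (bend T i) with h | h | h
  · exact absurd (a4 _ (by omega) h) b3
  · exact h
  · refine absurd ?_ a3
    by_cases hc : bend T i < i + d
    · exact hT _ a1 hc
    · exact b4 _ (by omega) h

/-- Every element of the interval from `bstart T i` to `bend T i` has the same block as `i`. -/
lemma block_const (T : ℕ → Prop) (n i j : ℕ) (hn : ¬ T n) (hi : i ≤ n)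
    (h1 : bstart T i ≤ j) (h2 : j ≤ bend T i) :
    bstart T j = bstart T i ∧ bend T j = bend T i := by
  obtain ⟨b1, b2, b3, b4⟩ := bend_spec T n i hn hi
  have hs := bstart_le T i
  have hr := bstart_run T i
  have hT : ∀ k, bstart T i ≤ k → k < bend T i → T k := by
    intro k h1 h2
    by_cases h : k < i
    · exact hr k h1 h
    · exact b4 k (by omega) h2
  have key : ∀ m, bstart T i ≤ m → m ≤ bend T i →
      bstart T m = bstart T (bstart T i) ∧ bend T m = bend T (bstart T i) := by
    intro m hm1 hm2
    obtain ⟨d, rfl⟩ := Nat.exists_eq_add_of_le hm1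
    exact ⟨bstart_const T _ d fun k h1 h2 => hT k h1 (by omega),
      bend_const T n _ d hn (by omega) fun k h1 h2 => hT k h1 (by omega)⟩
  have k1 := key j h1 h2
  have k2 := key i hs b1
  exact ⟨k1.1.trans k2.1.symm, k1.2.trans k2.2.symm⟩

/-- The involution of `{0, …, n}` fixing the final block and reversing all the others. -/
def brev (n : ℕ) (T : ℕ → Prop) (i : ℕ) : ℕ :=
  if bend T i = n then i else bstart T i + bend T i - i

lemma brev_lt (T : ℕ → Prop) (n i : ℕ) (hn : ¬ T n) (hi : i < n) : brev n T i < n := by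
  have h1 := bstart_le T i
  obtain ⟨b1, b2, b3, b4⟩ := bend_spec T n i hn hi.le
  unfold brev
  split_ifs <;> omega

lemma brev_brev (T : ℕ → Prop) (n i : ℕ) (hn : ¬ T n) (hi : i < n) :
    brev n T (brev n T i) = i := by
  have h1 := bstart_le T i
  obtain ⟨b1, b2, b3, b4⟩ := bend_spec T n i hn hi.le
  by_cases h : bend T i = n
  · simp [brev, h]
  · obtain ⟨c1, c2⟩ := block_const T n i (bstart T i + bend T i - i) hn hi.le (by omega) (by omega)
    simp only [brev, h, c1, c2, if_false]
    omega

/-- `brev` as a permutation of `Fin n`. -/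
def brevPerm (n : ℕ) (T : ℕ → Prop) (hn : ¬ T n) : Equiv.Perm (Fin n) :=
  Function.Involutive.toPerm (fun i => ⟨brev n T i, brev_lt T n i hn i.2⟩)
    (fun i => Fin.ext (brev_brev T n i hn i.2))

/-- The signed permutation matrix fixing `e_i` on the final block and sending `e_i` to minus its
mirror image in any other block. -/
def wmat (n : ℕ) (T : ℕ → Prop) : Matrix (Fin n) (Fin n) ℝ :=
  Matrix.of fun j i => if (j : ℕ) = brev n T i then (if bend T i = n then 1 else -1) else 0

lemma wmat_evec (l : ℕ) (T : ℕ → Prop) (hn : ¬ T (l-1)) (i : ℕ) (hi : i ≤ l - 1) :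
    (wmat (l-1) T).mulVec (evec l i) =
      (if bend T i = l - 1 then (1 : ℝ) else -1) • evec l (brev (l-1) T i) := by
  rcases hi.lt_or_eq with h | h
  · have := evec_fin l ⟨i, h⟩
    simp only at this
    rw [this, Matrix.mulVec_single_one]
    ext j
    simp [wmat, evec]
  · subst h
    have h1 := bend_spec T (l-1) (l-1) hn le_rfl
    have h2 : bend T (l-1) = l - 1 := by omega
    simp only [brev, h2, if_true]
    rw [evec_top l _ le_rfl]
    simp

lemma wmat_of_mem (l : ℕ) (T : ℕ → Prop) (hn : ¬ T (l-1)) (i : ℕ) (hi : i < l - 1) (hT : T i) :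
    (wmat (l-1) T).mulVec (alphaR l i) ∈ DeltaR l := by
  have hs : bstart T (i+1) = bstart T i := by rw [bstart, if_pos hT]
  have he : bend T (i+1) = bend T i := bend_const T (l-1) i 1 hn (by omega) fun k h1 h2 => by
    rwa [show k = i by omega]
  rw [alphaR_eq l i, Matrix.mulVec_sub, wmat_evec l T hn i hi.le,
    wmat_evec l T hn (i+1) (by omega)]
  simp only [brev, hs, he]
  by_cases h : bend T i = l - 1
  · simp only [h, if_true, one_smul]
    exact ⟨i, hi, (alphaR_eq l i).symm⟩
  · have h1 := bstart_le T i
    have b1 := bend_spec T (l-1) i hn hi.le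
    have b2 := bend_spec T (l-1) (i+1) hn (by omega)
    refine ⟨bstart T i + bend T i - (i+1), by omega, ?_⟩
    rw [alphaR_eq l _,
      show bstart T i + bend T i - (i+1) + 1 = bstart T i + bend T i - i by omega]
    simp only [h, if_false, neg_smul, one_smul]
    abel

lemma wmat_of_not_mem (l : ℕ) (T : ℕ → Prop) (hn : ¬ T (l-1)) (i : ℕ) (hi : i < l - 1)
    (hT : ¬ T i) : -((wmat (l-1) T).mulVec (alphaR l i)) ∈ PhiPlus l := by
  have hs : bstart T (i+1) = i + 1 := by rw [bstart, if_neg hT]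
  have h1 := bstart_le T i
  obtain ⟨b1, b2, b3, b4⟩ := bend_spec T (l-1) i hn hi.le
  obtain ⟨c1, c2, c3, c4⟩ := bend_spec T (l-1) (i+1) hn (by omega)
  have he : bend T i = i := by
    by_contra hc
    exact hT (b4 i le_rfl (by omega))
  rw [alphaR_eq l i, Matrix.mulVec_sub, wmat_evec l T hn i hi.le,
    wmat_evec l T hn (i+1) (by omega)]
  simp only [brev, hs, he, hi.ne, if_false, Nat.add_sub_cancel, Nat.add_sub_cancel_left]
  by_cases h : bend T (i+1) = l - 1
  · simp only [h, if_true, one_smul, neg_smul]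
    have := evec_add_mem l (bstart T i) (i+1) (by omega) (by omega)
    convert this using 1
    abel
  · simp only [h, if_false, one_smul, neg_smul]
    have := evec_sub_mem l (bstart T i) (bend T (i+1)) (by omega) (by omega)
    convert this using 1
    abel

lemma theta_surjective (l : ℕ) (S : Set (Fin (l-1) → ℝ)) (hS : S ⊆ DeltaR l) :
    ∃ w ∈ BesselSupp l, thetaSet l w = S := by
  let T : ℕ → Prop := fun i => i < l - 1 ∧ alphaR l i ∈ S
  have hn : ¬ T (l-1) := fun h => lt_irrefl _ h.1
  refine ⟨wmat (l-1) T, ⟨⟨brevPerm (l-1) T hn, fun i => if bend T i = l - 1 then 1 else -1,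
    fun i => ?_, fun i => wmat_evec l T hn i i.2.le⟩, ?_⟩, ?_⟩
  · simp only
    split_ifs <;> simp
  · rintro _ ⟨i, hi, rfl⟩
    by_cases h : T i
    · exact Or.inl (wmat_of_mem l T hn i hi h)
    · exact Or.inr (wmat_of_not_mem l T hn i hi h)
  · ext a
    constructor
    · rintro ⟨⟨i, hi, rfl⟩, h⟩
      by_contra hc
      exact not_pos_neg l _ h (wmat_of_not_mem l T hn i hi fun h' => hc h'.2)
    · intro ha
      obtain ⟨i, hi, rfl⟩ := hS ha
      exact ⟨⟨i, hi, rfl⟩, delta_sub l (wmat_of_mem l T hn i hi ⟨hi, ha⟩)⟩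

/-- `w ↦ θ_w` restricted to the Bessel support `B(W)` is a bijection onto the
power set of `Δ`; moreover `θ_w = {α ∈ Δ : w(α) ∈ Δ}` for `w ∈ B(W)`. -/
theorem statement12 (l : ℕ) (hl : 2 ≤ l) :
    (∀ w ∈ BesselSupp l, ∀ w' ∈ BesselSupp l, thetaSet l w = thetaSet l w' → w = w') ∧
    (∀ S : Set (Fin (l-1) → ℝ), S ⊆ DeltaR l → ∃ w ∈ BesselSupp l, thetaSet l w = S) ∧
    (∀ w ∈ BesselSupp l, thetaSet l w = {a | a ∈ DeltaR l ∧ w.mulVec a ∈ DeltaR l}) := by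
  refine ⟨fun w hw w' hw' h => theta_injective l w w' hw hw' h,
    fun S hS => theta_surjective l S hS, fun w hw => ?_⟩
  ext a
  exact ⟨fun h => ⟨h.1, (hw.2 a h.1).resolve_right (not_pos_neg l _ h.2)⟩,
    fun h => ⟨h.1, delta_sub l h.2⟩⟩
end
end
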